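/- arXiv:2304.13173 — 2 statements merged into one kernel-verified Lean document; each statement's English description precedes it below -/
import Mathlib

section
/- Let 𝒩 be a nonprincipal ultrafilter on ℕ and let O* be the ultrapower of the ring ℤ[1/2] over 𝒩 (the commutative ring of germs at 𝒩 of sequences in ℤ[1/2]). For all nonzero a,b ∈ O*, let I be the ideal of O* generated by a and b. Then the commutator subgroup of the principal congruence subgroup SL₃(O*)[I] contains SL₃(O*)[I²]. -/
/-- The ring `ℤ[1/2]`, realized as the smallest subring of `ℚ` containing `1/2`. -/
def Zhalf : Subring ℚ := Subring.closure {(2 : ℚ)⁻¹}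

/-- For a commutative ring `R` and an ideal `I`, the principal congruence subgroup
`SL₃(R)[I]`, i.e. the kernel of the reduction map `SL₃(R) → SL₃(R/I)`. -/
def SL3Congruence (R : Type*) [CommRing R] (I : Ideal R) :
    Subgroup (Matrix.SpecialLinearGroup (Fin 3) R) :=
  (Matrix.SpecialLinearGroup.map (Ideal.Quotient.mk I)).ker

set_option linter.unusedSimpArgs false
set_option linter.all false
open Matrix

namespace Menn

section generic

variable {R : Type*} [CommRing R]

def e12 (x : R) : SpecialLinearGroup (Fin 3) R :=
  ⟨!![1, x, 0; 0, 1, 0; 0, 0, 1], by simp [det_fin_three]⟩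
def e13 (x : R) : SpecialLinearGroup (Fin 3) R :=
  ⟨!![1, 0, x; 0, 1, 0; 0, 0, 1], by simp [det_fin_three]⟩
def e21 (x : R) : SpecialLinearGroup (Fin 3) R :=
  ⟨!![1, 0, 0; x, 1, 0; 0, 0, 1], by simp [det_fin_three]⟩
def e23 (x : R) : SpecialLinearGroup (Fin 3) R :=
  ⟨!![1, 0, 0; 0, 1, x; 0, 0, 1], by simp [det_fin_three]⟩
def e31 (x : R) : SpecialLinearGroup (Fin 3) R :=
  ⟨!![1, 0, 0; 0, 1, 0; x, 0, 1], by simp [det_fin_three]⟩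
def e32 (x : R) : SpecialLinearGroup (Fin 3) R :=
  ⟨!![1, 0, 0; 0, 1, 0; 0, x, 1], by simp [det_fin_three]⟩

/-- the underlying matrix -/
def mt {n : Type*} [Fintype n] [DecidableEq n] (A : SpecialLinearGroup n R) : Matrix n n R := A.1

section mt
variable {n : Type*} [Fintype n] [DecidableEq n]
theorem sl_ext {A B : SpecialLinearGroup n R} (h : mt A = mt B) : A = B := Subtype.ext h
theorem mt_mul (A B : SpecialLinearGroup n R) : mt (A * B) = mt A * mt B := rfl
@[simp] theorem mt_one : mt (1 : SpecialLinearGroup n R) = 1 := rfl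
@[simp] theorem mt_transpose (A : SpecialLinearGroup n R) : mt A.transpose = (mt A)ᵀ := rfl
theorem mt_inv (A : SpecialLinearGroup n R) : mt A⁻¹ = adjugate (mt A) := rfl
end mt

theorem det2 (X : SpecialLinearGroup (Fin 2) R) : mt X 0 0 * mt X 1 1 - mt X 0 1 * mt X 1 0 = 1 := by
  have h : det (mt X) = 1 := X.2
  rwa [det_fin_two] at h

def mk2 (a b c d : R) (h : a * d - b * c = 1) : SpecialLinearGroup (Fin 2) R :=
  ⟨!![a, b; c, d], by rw [det_fin_two]; simpa using h⟩

def B12 (X : SpecialLinearGroup (Fin 2) R) : SpecialLinearGroup (Fin 3) R :=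
  ⟨!![mt X 0 0, mt X 0 1, 0; mt X 1 0, mt X 1 1, 0; 0, 0, 1], by
    have := det2 X
    simp [det_fin_three]; linear_combination this⟩
def B13 (X : SpecialLinearGroup (Fin 2) R) : SpecialLinearGroup (Fin 3) R :=
  ⟨!![mt X 0 0, 0, mt X 0 1; 0, 1, 0; mt X 1 0, 0, mt X 1 1], by
    have := det2 X
    simp [det_fin_three]; linear_combination this⟩
def B23 (X : SpecialLinearGroup (Fin 2) R) : SpecialLinearGroup (Fin 3) R :=
  ⟨!![1, 0, 0; 0, mt X 0 0, mt X 0 1; 0, mt X 1 0, mt X 1 1], by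
    have := det2 X
    simp [det_fin_three]; linear_combination this⟩

theorem e12_coe (x : R) : mt (e12 x : SpecialLinearGroup (Fin 3) R) =
    !![1, x, 0; 0, 1, 0; 0, 0, 1] := rfl
theorem e13_coe (x : R) : mt (e13 x : SpecialLinearGroup (Fin 3) R) =
    !![1, 0, x; 0, 1, 0; 0, 0, 1] := rfl
theorem e21_coe (x : R) : mt (e21 x : SpecialLinearGroup (Fin 3) R) =
    !![1, 0, 0; x, 1, 0; 0, 0, 1] := rfl
theorem e23_coe (x : R) : mt (e23 x : SpecialLinearGroup (Fin 3) R) =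
    !![1, 0, 0; 0, 1, x; 0, 0, 1] := rfl
theorem e31_coe (x : R) : mt (e31 x : SpecialLinearGroup (Fin 3) R) =
    !![1, 0, 0; 0, 1, 0; x, 0, 1] := rfl
theorem e32_coe (x : R) : mt (e32 x : SpecialLinearGroup (Fin 3) R) =
    !![1, 0, 0; 0, 1, 0; 0, x, 1] := rfl
theorem B12_coe (X : SpecialLinearGroup (Fin 2) R) : mt (B12 X) =
    !![mt X 0 0, mt X 0 1, 0; mt X 1 0, mt X 1 1, 0; 0, 0, 1] := rfl
theorem B13_coe (X : SpecialLinearGroup (Fin 2) R) : mt (B13 X) =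
    !![mt X 0 0, 0, mt X 0 1; 0, 1, 0; mt X 1 0, 0, mt X 1 1] := rfl
theorem B23_coe (X : SpecialLinearGroup (Fin 2) R) : mt (B23 X) =
    !![1, 0, 0; 0, mt X 0 0, mt X 0 1; 0, mt X 1 0, mt X 1 1] := rfl
theorem mk2_coe (a b c d : R) (h : a * d - b * c = 1) :
    mt (mk2 a b c d h) = !![a, b; c, d] := rfl

theorem B12_mul (X Y : SpecialLinearGroup (Fin 2) R) : B12 (X * Y) = B12 X * B12 Y := by
  apply sl_ext
  simp only [mt_mul, mt_one, e12_coe, e13_coe, e21_coe, e23_coe, e31_coe, e32_coe, B12_coe, B13_coe,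
      B23_coe, mk2_coe]
  ext i j
  fin_cases i <;> fin_cases j <;> simp [Matrix.mul_apply, Fin.sum_univ_succ]

theorem B12_one : B12 (1 : SpecialLinearGroup (Fin 2) R) = 1 := by
  apply sl_ext
  simp only [mt_mul, mt_one, e12_coe, e13_coe, e21_coe, e23_coe, e31_coe, e32_coe, B12_coe, B13_coe,
      B23_coe, mk2_coe]
  ext i j
  fin_cases i <;> fin_cases j <;> simp

/-- A normal subgroup containing all elementary matrices of level `Q`. -/
structure HasEl (E : Subgroup (SpecialLinearGroup (Fin 3) R)) (Q : R) : Prop where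
  h12 : ∀ x, Q ∣ x → e12 x ∈ E
  h13 : ∀ x, Q ∣ x → e13 x ∈ E
  h21 : ∀ x, Q ∣ x → e21 x ∈ E
  h23 : ∀ x, Q ∣ x → e23 x ∈ E
  h31 : ∀ x, Q ∣ x → e31 x ∈ E
  h32 : ∀ x, Q ∣ x → e32 x ∈ E

def InG (Q : R) (X : SpecialLinearGroup (Fin 2) R) : Prop :=
  Q ∣ mt X 0 0 - 1 ∧ Q ∣ mt X 0 1 ∧ Q ∣ mt X 1 0 ∧ Q ∣ mt X 1 1 - 1

variable {E : Subgroup (SpecialLinearGroup (Fin 3) R)} [hn : E.Normal] {Q : R}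

/-- class modulo `E` -/
def cl (E : Subgroup (SpecialLinearGroup (Fin 3) R)) [E.Normal] :
    SpecialLinearGroup (Fin 3) R →* SpecialLinearGroup (Fin 3) R ⧸ E := QuotientGroup.mk' E

theorem cl_one {x : SpecialLinearGroup (Fin 3) R} (h : x ∈ E) : cl E x = 1 :=
  (QuotientGroup.eq_one_iff x).2 h

def M (E : Subgroup (SpecialLinearGroup (Fin 3) R)) [E.Normal] :
    SpecialLinearGroup (Fin 2) R →* SpecialLinearGroup (Fin 3) R ⧸ E where
  toFun X := cl E (B12 X)
  map_one' := by rw [B12_one, map_one]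
  map_mul' X Y := by rw [B12_mul, map_mul]

theorem M_def (X : SpecialLinearGroup (Fin 2) R) : M E X = cl E (B12 X) := rfl

theorem comm13 (hE : HasEl E Q) {X : SpecialLinearGroup (Fin 2) R} (hX : InG Q X) (t : R) :
    Commute (M E X) (cl E (e13 t)) := by
  have key : B12 X * e13 t = e13 ((mt X 0 0 - 1) * t) * e23 (mt X 1 0 * t) * e13 t * B12 X := by
    apply sl_ext
    simp only [mt_mul, mt_one, e12_coe, e13_coe, e21_coe, e23_coe, e31_coe, e32_coe, B12_coe, B13_coe,
      B23_coe, mk2_coe]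
    ext i j
    fin_cases i <;> fin_cases j <;> simp [Matrix.mul_apply, Fin.sum_univ_succ] <;> ring
  have := congrArg (cl E) key
  simp only [map_mul, cl_one (hE.h13 _ (hX.1.mul_right t)),
    cl_one (hE.h23 _ (hX.2.2.1.mul_right t)), one_mul] at this
  exact this

theorem comm23 (hE : HasEl E Q) {X : SpecialLinearGroup (Fin 2) R} (hX : InG Q X) (t : R) :
    Commute (M E X) (cl E (e23 t)) := by
  have key : B12 X * e23 t = e13 (mt X 0 1 * t) * e23 ((mt X 1 1 - 1) * t) * e23 t * B12 X := by
    apply sl_ext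
    simp only [mt_mul, mt_one, e12_coe, e13_coe, e21_coe, e23_coe, e31_coe, e32_coe, B12_coe, B13_coe,
      B23_coe, mk2_coe]
    ext i j
    fin_cases i <;> fin_cases j <;> simp [Matrix.mul_apply, Fin.sum_univ_succ] <;> ring
  have := congrArg (cl E) key
  simp only [map_mul, cl_one (hE.h13 _ (hX.2.1.mul_right t)),
    cl_one (hE.h23 _ (hX.2.2.2.mul_right t)), one_mul] at this
  exact this

theorem comm31 (hE : HasEl E Q) {X : SpecialLinearGroup (Fin 2) R} (hX : InG Q X) (t : R) :
    Commute (M E X) (cl E (e31 t)) := by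
  have key : e31 t * B12 X = B12 X * e31 t * e31 ((mt X 0 0 - 1) * t) * e32 (mt X 0 1 * t) := by
    apply sl_ext
    simp only [mt_mul, mt_one, e12_coe, e13_coe, e21_coe, e23_coe, e31_coe, e32_coe, B12_coe, B13_coe,
      B23_coe, mk2_coe]
    ext i j
    fin_cases i <;> fin_cases j <;> simp [Matrix.mul_apply, Fin.sum_univ_succ] <;> ring
  have := congrArg (cl E) key
  simp only [map_mul, cl_one (hE.h31 _ (hX.1.mul_right t)),
    cl_one (hE.h32 _ (hX.2.1.mul_right t)), mul_one] at this
  exact this.symm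

theorem comm32 (hE : HasEl E Q) {X : SpecialLinearGroup (Fin 2) R} (hX : InG Q X) (t : R) :
    Commute (M E X) (cl E (e32 t)) := by
  have key : e32 t * B12 X = B12 X * e32 t * e31 (mt X 1 0 * t) * e32 ((mt X 1 1 - 1) * t) := by
    apply sl_ext
    simp only [mt_mul, mt_one, e12_coe, e13_coe, e21_coe, e23_coe, e31_coe, e32_coe, B12_coe, B13_coe,
      B23_coe, mk2_coe]
    ext i j
    fin_cases i <;> fin_cases j <;> simp [Matrix.mul_apply, Fin.sum_univ_succ] <;> ring
  have := congrArg (cl E) key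
  simp only [map_mul, cl_one (hE.h31 _ (hX.2.2.1.mul_right t)),
    cl_one (hE.h32 _ (hX.2.2.2.mul_right t)), mul_one] at this
  exact this.symm

theorem comm12 (hE : HasEl E Q) {X : SpecialLinearGroup (Fin 2) R} (hX : InG Q X) (t : R) :
    Commute (M E X) (cl E (e12 t)) := by
  have key : e12 t = e13 t * e32 1 * e13 (-t) * e32 (-1) := by
    apply sl_ext
    simp only [mt_mul, mt_one, e12_coe, e13_coe, e21_coe, e23_coe, e31_coe, e32_coe, B12_coe, B13_coe,
      B23_coe, mk2_coe]
    ext i j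
    fin_cases i <;> fin_cases j <;> simp [Matrix.mul_apply, Fin.sum_univ_succ]
  rw [key]
  simp only [map_mul]
  exact (((comm13 hE hX _).mul_right (comm32 hE hX _)).mul_right (comm13 hE hX _)).mul_right
    (comm32 hE hX _)

theorem comm21 (hE : HasEl E Q) {X : SpecialLinearGroup (Fin 2) R} (hX : InG Q X) (t : R) :
    Commute (M E X) (cl E (e21 t)) := by
  have key : e21 t = e23 t * e31 1 * e23 (-t) * e31 (-1) := by
    apply sl_ext
    simp only [mt_mul, mt_one, e12_coe, e13_coe, e21_coe, e23_coe, e31_coe, e32_coe, B12_coe, B13_coe,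
      B23_coe, mk2_coe]
    ext i j
    fin_cases i <;> fin_cases j <;> simp [Matrix.mul_apply, Fin.sum_univ_succ]
  rw [key]
  simp only [map_mul]
  exact (((comm23 hE hX _).mul_right (comm31 hE hX _)).mul_right (comm23 hE hX _)).mul_right
    (comm31 hE hX _)

/-- signed permutation matrices -/
def w12 : SpecialLinearGroup (Fin 3) R := e12 (-1) * e21 1 * e12 (-1)
def w23 : SpecialLinearGroup (Fin 3) R := e23 (-1) * e32 1 * e23 (-1)

theorem w12_coe : mt (w12 : SpecialLinearGroup (Fin 3) R) =
    !![0, -1, 0; 1, 0, 0; 0, 0, 1] := by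
  simp only [mt_mul, mt_one, e12_coe, e13_coe, e21_coe, e23_coe, e31_coe, e32_coe, B12_coe, B13_coe,
      B23_coe, mk2_coe, w12, w23]
  ext i j
  fin_cases i <;> fin_cases j <;> simp [Matrix.mul_apply, Fin.sum_univ_succ]

theorem w23_coe : mt (w23 : SpecialLinearGroup (Fin 3) R) =
    !![1, 0, 0; 0, 0, -1; 0, 1, 0] := by
  simp only [mt_mul, mt_one, e12_coe, e13_coe, e21_coe, e23_coe, e31_coe, e32_coe, B12_coe, B13_coe,
      B23_coe, mk2_coe, w12, w23]
  ext i j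
  fin_cases i <;> fin_cases j <;> simp [Matrix.mul_apply, Fin.sum_univ_succ]

theorem comm_w12 (hE : HasEl E Q) {X : SpecialLinearGroup (Fin 2) R} (hX : InG Q X) :
    Commute (M E X) (cl E w12) := by
  simp only [w12, map_mul]
  exact ((comm12 hE hX _).mul_right (comm21 hE hX _)).mul_right (comm12 hE hX _)

theorem comm_w23 (hE : HasEl E Q) {X : SpecialLinearGroup (Fin 2) R} (hX : InG Q X) :
    Commute (M E X) (cl E w23) := by
  simp only [w23, map_mul]
  exact ((comm23 hE hX _).mul_right (comm32 hE hX _)).mul_right (comm23 hE hX _)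

theorem cl_B13 (hE : HasEl E Q) {X : SpecialLinearGroup (Fin 2) R} (hX : InG Q X) :
    cl E (B13 X) = M E X := by
  have key : w23 * B12 X = B13 X * w23 := by
    apply sl_ext
    simp only [mt_mul, mt_one, e12_coe, e13_coe, e21_coe, e23_coe, e31_coe, e32_coe, B12_coe, B13_coe,
      B23_coe, mk2_coe, w12_coe, w23_coe]
    ext i j
    fin_cases i <;> fin_cases j <;> simp [Matrix.mul_apply, Fin.sum_univ_succ]
  have := congrArg (cl E) key
  simp only [map_mul, ← M_def] at this
  rw [← (comm_w23 hE hX).eq] at this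
  exact (mul_right_cancel this).symm

theorem cl_B23 (hE : HasEl E Q) {X : SpecialLinearGroup (Fin 2) R} (hX : InG Q X) :
    cl E (B23 X) = M E X := by
  have key : w12 * B13 X = B23 X * w12 := by
    apply sl_ext
    simp only [mt_mul, mt_one, e12_coe, e13_coe, e21_coe, e23_coe, e31_coe, e32_coe, B12_coe, B13_coe,
      B23_coe, mk2_coe, w12_coe, w23_coe]
    ext i j
    fin_cases i <;> fin_cases j <;> simp [Matrix.mul_apply, Fin.sum_univ_succ]
  have := congrArg (cl E) key
  simp only [map_mul, cl_B13 hE hX] at this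
  rw [← (comm_w12 hE hX).eq] at this
  exact (mul_right_cancel this).symm

theorem InG.mul {X Y : SpecialLinearGroup (Fin 2) R} (hX : InG Q X) (hY : InG Q Y) :
    InG Q (X * Y) := by
  obtain ⟨⟨x1, h1⟩, ⟨x2, h2⟩, ⟨x3, h3⟩, ⟨x4, h4⟩⟩ := hX
  obtain ⟨⟨y1, k1⟩, ⟨y2, k2⟩, ⟨y3, k3⟩, ⟨y4, k4⟩⟩ := hY
  rw [sub_eq_iff_eq_add] at h1 h4 k1 k4
  simp only [InG, mt_mul, Matrix.mul_apply, Fin.sum_univ_two, h1, h2, h3, h4,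
    k1, k2, k3, k4]
  refine ⟨⟨Q * x1 * y1 + x1 + y1 + Q * x2 * y3, by ring⟩, ⟨(Q * x1 + 1) * y2 + x2 * (Q * y4 + 1), by ring⟩,
    ⟨x3 * (Q * y1 + 1) + (Q * x4 + 1) * y3, by ring⟩, ⟨Q * x4 * y4 + x4 + y4 + Q * x3 * y2, by ring⟩⟩

theorem InG.one : InG Q (1 : SpecialLinearGroup (Fin 2) R) := by simp [InG]

theorem inv_coe2 (X : SpecialLinearGroup (Fin 2) R) :
    mt X⁻¹ =
      !![mt X 1 1, -mt X 0 1; -mt X 1 0, mt X 0 0] := by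
  rw [mt_inv, adjugate_fin_two]

theorem InG.inv {X : SpecialLinearGroup (Fin 2) R} (hX : InG Q X) : InG Q X⁻¹ := by
  simp only [InG, inv_coe2]
  simpa using ⟨hX.2.2.2, hX.2.1, hX.2.2.1, hX.1⟩

theorem InG.pow {X : SpecialLinearGroup (Fin 2) R} (hX : InG Q X) (n : ℕ) : InG Q (X ^ n) := by
  induction n with
  | zero => simpa using InG.one
  | succ k ih => rw [pow_succ]; exact ih.mul hX

theorem InG.tr {X : SpecialLinearGroup (Fin 2) R} (hX : InG Q X) : InG Q X.transpose := by
  simpa [InG] using ⟨hX.1, hX.2.2.1, hX.2.1, hX.2.2.2⟩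

theorem M_tr (hE : HasEl E Q) {X : SpecialLinearGroup (Fin 2) R} (hX : InG Q X) :
    M E X.transpose = (M E X)⁻¹ := by
  have key : w12 * B12 X = B12 (X.transpose)⁻¹ * w12 := by
    apply sl_ext
    simp only [mt_mul, mt_one, e12_coe, e13_coe, e21_coe, e23_coe, e31_coe, e32_coe, B12_coe, B13_coe,
      B23_coe, mk2_coe, w12_coe, w23_coe]
    ext i j
    fin_cases i <;> fin_cases j <;>
      simp [inv_coe2, Matrix.mul_apply, Fin.sum_univ_succ]
  have := congrArg (cl E) key
  simp only [map_mul, ← M_def] at this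
  rw [← (comm_w12 hE hX).eq, map_inv] at this
  rw [mul_right_cancel this, inv_inv]

/-- dependence on first row only -/
theorem M_row (hE : HasEl E Q) {X Y : SpecialLinearGroup (Fin 2) R} (hX : InG Q X) (hY : InG Q Y)
    (h0 : mt X 0 0 = mt Y 0 0) (h1 : mt X 0 1 = mt Y 0 1) : M E X = M E Y := by
  have dX := det2 X
  have dY := det2 Y
  obtain ⟨x, hx⟩ : ∃ x, x = mt X 1 0 * mt Y 1 1 - mt X 1 1 * mt Y 1 0 := ⟨_, rfl⟩
  have hQ : Q ∣ x := by
    rw [hx]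
    exact dvd_sub (hX.2.2.1.mul_right _) (hY.2.2.1.mul_left _)
  have key : B12 X = e21 x * B12 Y := by
    apply sl_ext
    simp only [mt_mul, mt_one, e12_coe, e13_coe, e21_coe, e23_coe, e31_coe, e32_coe, B12_coe, B13_coe,
      B23_coe, mk2_coe]
    ext i j
    fin_cases i <;> fin_cases j <;> simp [Matrix.mul_apply, Fin.sum_univ_succ] <;> grind
  have := congrArg (cl E) key
  rw [map_mul, cl_one (hE.h21 _ hQ), one_mul] at this
  exact this

def W (Q a b : R) : Prop := Q ∣ a - 1 ∧ Q ∣ b ∧ IsCoprime a b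

theorem exX {a b : R} (h : W Q a b) : ∃ X : SpecialLinearGroup (Fin 2) R,
    InG Q X ∧ mt X 0 0 = a ∧ mt X 0 1 = b := by
  obtain ⟨⟨s, hs⟩, ⟨t, ht⟩, x, y, hxy⟩ := h
  refine ⟨mk2 a b (-b * y ^ 2) (x * (1 + b * y)) (by linear_combination (1 + b * y) * hxy), ?_, rfl, rfl⟩
  refine ⟨⟨s, hs⟩, ⟨t, ht⟩, ⟨-t * y ^ 2, ?_⟩, ⟨x * t * y - x * s - t * y, ?_⟩⟩
  · simp [mk2_coe]; rw [ht]; ring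
  · have : a = 1 + Q * s := by rw [← hs]; ring
    subst this ht
    simp [mk2_coe]
    linear_combination hxy

theorem InG.W {X : SpecialLinearGroup (Fin 2) R} (hX : InG Q X) : W Q (mt X 0 0) (mt X 0 1) :=
  ⟨hX.1, hX.2.1, mt X 1 1, - mt X 1 0, by linear_combination det2 X⟩

open Classical in
noncomputable def m (E : Subgroup (SpecialLinearGroup (Fin 3) R)) [E.Normal] (Q a b : R) :
    SpecialLinearGroup (Fin 3) R ⧸ E :=
  if h : ∃ X : SpecialLinearGroup (Fin 2) R, InG Q X ∧ mt X 0 0 = a ∧ mt X 0 1 = b then M E h.choose else 1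

theorem m_of (hE : HasEl E Q) {X : SpecialLinearGroup (Fin 2) R} (hX : InG Q X) :
    M E X = m E Q (mt X 0 0) (mt X 0 1) := by
  have h : ∃ Y : SpecialLinearGroup (Fin 2) R, InG Q Y ∧ mt Y 0 0 = mt X 0 0 ∧ mt Y 0 1 = mt X 0 1 := ⟨X, hX, rfl, rfl⟩
  rw [m, dif_pos h]
  exact M_row hE hX h.choose_spec.1 h.choose_spec.2.1.symm h.choose_spec.2.2.symm

theorem m_addb (hE : HasEl E Q) {a b t : R} (h : W Q a b) (ht : Q ∣ t) :
    m E Q a (b + t * a) = m E Q a b := by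
  obtain ⟨X, hX, rfl, rfl⟩ := exX h
  have hT : InG Q (mk2 1 t 0 1 (by ring)) := by simpa [InG, mk2_coe] using ht
  have h1 := m_of hE (hX.mul hT)
  rw [map_mul] at h1
  have h2 : M E (mk2 1 t 0 1 (by ring)) = 1 := by
    rw [M_def, ← cl_one (hE.h12 t ht)]
    rfl
  rw [h2, mul_one, m_of hE hX] at h1
  simp [mk2_coe, mt_mul, Matrix.mul_apply, Fin.sum_univ_succ] at h1
  rw [h1]; congr 1; ring

theorem W.adda {a b : R} (h : W Q a b) (t : R) : W Q (a + t * b) b := by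
  refine ⟨?_, h.2.1, h.2.2.add_mul_right_left t⟩
  have := dvd_add h.1 (h.2.1.mul_left t)
  convert this using 1; ring

theorem W.addb {a b t : R} (h : W Q a b) (ht : Q ∣ t) : W Q a (b + t * a) :=
  ⟨h.1, dvd_add h.2.1 (ht.mul_right _), h.2.2.add_mul_right_right t⟩

theorem m_adda (hE : HasEl E Q) {a b : R} (t : R) (h : W Q a b) :
    m E Q (a + t * b) b = m E Q a b := by
  obtain ⟨X, hX, rfl, rfl⟩ := exX h
  obtain ⟨Y, hY, hY1, hY2⟩ := exX (h.adda t)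
  have dX := det2 X
  have hZ : InG Q (mk2 (mt X 0 0 + t * mt X 0 1) (mt X 0 1) (mt X 1 0 + t * mt X 1 1 - t * mt X 0 0 - t ^ 2 * mt X 0 1)
      (mt X 1 1 - t * mt X 0 1) (by linear_combination dX)) := by
    refine ⟨(h.adda t).1, hX.2.1, ?_, ?_⟩
    · have := dvd_add hX.2.2.1 (dvd_sub (dvd_mul_of_dvd_right (dvd_sub hX.2.2.2 hX.1) t) (hX.2.1.mul_left (t^2)))
      convert this using 1
      simp [mk2_coe]; ring
    · have := dvd_sub hX.2.2.2 (hX.2.1.mul_left t)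
      convert this using 1
      simp [mk2_coe]; ring
  have h1 := m_of hE hZ
  have key : e21 t * B12 (mk2 (mt X 0 0 + t * mt X 0 1) (mt X 0 1) (mt X 1 0 + t * mt X 1 1 - t * mt X 0 0 - t ^ 2 * mt X 0 1)
      (mt X 1 1 - t * mt X 0 1) (by linear_combination dX)) = B12 X * e21 t := by
    apply sl_ext
    simp only [mt_mul, mt_one, e12_coe, e13_coe, e21_coe, e23_coe, e31_coe, e32_coe, B12_coe, B13_coe,
      B23_coe, mk2_coe]
    ext i j
    fin_cases i <;> fin_cases j <;> simp [Matrix.mul_apply, Fin.sum_univ_succ] <;> ring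
  have := congrArg (cl E) key
  simp only [map_mul, ← M_def] at this
  rw [(comm21 hE hX t).eq] at this
  have := mul_left_cancel this
  rw [h1, m_of hE hX] at this
  exact this

theorem W.mul {a b b' : R} (h : W Q a b) (h' : W Q a b') : W Q a (b * b') :=
  ⟨h.1, h.2.1.mul_right _, h.2.2.mul_right h'.2.2⟩

theorem m_mul (hE : HasEl E Q) {a b b' : R} (h : W Q a b) (h' : W Q a b') :
    m E Q a (b * b') = m E Q a b * m E Q a b' := by
  obtain ⟨X, hX, rfl, rfl⟩ := exX h
  obtain ⟨Y, hY, hY1, rfl⟩ := exX h'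
  have dX := det2 X
  have dY := det2 Y
  rw [hY1] at dY
  have hZ : InG Q (mk2 (mt X 0 0) (mt X 0 1 * mt Y 0 1) (- mt X 1 0 * mt Y 1 0) (mt Y 1 1 - mt Y 1 0 * mt X 1 1 * mt Y 0 1)
    (by linear_combination dY - mt Y 0 1 * mt Y 1 0 * dX)) := by
    refine ⟨hX.1, hX.2.1.mul_right _, hY.2.2.1.mul_left _, ?_⟩
    have := dvd_sub hY.2.2.2 (hY.2.1.mul_left (mt Y 1 0 * mt X 1 1))
    convert this using 1
    simp [mk2_coe]; ring
  have key : e32 (- mt Y 1 0) * (B12 X * B23 Y * e12 (- mt X 0 1) * e21 (- mt X 1 0) * e23 (- mt X 1 1 * mt Y 0 1)) =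
      B13 (mk2 (mt X 0 0) (mt X 0 1 * mt Y 0 1) (- mt X 1 0 * mt Y 1 0) (mt Y 1 1 - mt Y 1 0 * mt X 1 1 * mt Y 0 1)
    (by linear_combination dY - mt Y 0 1 * mt Y 1 0 * dX)) := by
    apply sl_ext
    simp only [mt_mul, mt_one, e12_coe, e13_coe, e21_coe, e23_coe, e31_coe, e32_coe, B12_coe, B13_coe,
      B23_coe, mk2_coe]
    ext i j
    fin_cases i <;> fin_cases j <;> simp [Matrix.mul_apply, Fin.sum_univ_succ, hY1] <;> grind
  have := congrArg (cl E) key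
  rw [cl_B13 hE hZ, m_of hE hZ] at this
  simp only [map_mul, cl_B23 hE hY, cl_one (hE.h32 _ ((dvd_neg (α := R)).2 hY.2.2.1)),
    cl_one (hE.h12 _ ((dvd_neg (α := R)).2 hX.2.1)), cl_one (hE.h21 _ ((dvd_neg (α := R)).2 hX.2.2.1)),
    cl_one (hE.h23 _ (hY.2.1.mul_left (- mt X 1 1))), one_mul, mul_one, ← M_def] at this
  rw [m_of hE hX, m_of hE hY, hY1] at this
  exact this.symm

theorem W.ofQ {a : R} (h : Q ∣ a - 1) {u : R} (hu : IsUnit u) : W Q a (u * Q) := by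
  refine ⟨h, dvd_mul_left _ _, ?_⟩
  obtain ⟨s, hs⟩ := h
  obtain ⟨v, hv⟩ := hu.exists_left_inv
  exact ⟨1, - s * v, by linear_combination hs - Q * s * hv⟩

theorem m_one (hE : HasEl E Q) {b : R} (hb : Q ∣ b) : m E Q 1 b = 1 := by
  have h0 : W Q (1 : R) 0 := ⟨by simp, by simp, isCoprime_one_left⟩
  have h1 := m_addb hE h0 hb
  rw [zero_add, mul_one] at h1
  rw [h1]
  have := m_of hE (InG.one (Q := Q) (R := R))
  simpa using this.symm

theorem m_Q (hE : HasEl E Q) {a : R} (h : Q ∣ a - 1) {u : R} (hu : IsUnit u) :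
    m E Q a (u * Q) = 1 := by
  obtain ⟨s, hs⟩ := h
  obtain ⟨v, hv⟩ := hu.exists_left_inv
  have h1 : W Q (1 : R) (u * Q) := W.ofQ (by simp) hu
  have := m_adda hE (s * v) h1
  rw [m_one hE h1.2.1] at this
  rw [← this]
  congr 1
  linear_combination hs - Q * s * hv

theorem m_Qmul (hE : HasEl E Q) {a b : R} (h : W Q a b) : m E Q a (Q * b) = m E Q a b := by
  have hq := W.ofQ h.1 isUnit_one
  have := m_Q hE h.1 isUnit_one
  rw [one_mul] at *
  rw [m_mul hE hq h, this, one_mul]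

theorem m_unit (hE : HasEl E Q) {a b u : R} (h : W Q a b) (hu : IsUnit u) :
    m E Q a (u * b) = m E Q a b := by
  have hub : W Q a (u * b) := ⟨h.1, h.2.1.mul_left _, (isCoprime_mul_unit_left_right hu a b).2 h.2.2⟩
  rw [← m_Qmul hE hub, ← mul_assoc, mul_comm Q u, m_mul hE (W.ofQ h.1 hu) h, m_Q hE h.1 hu, one_mul]

theorem m_two (hE : HasEl E Q) {h β : R} (hW : W Q h β) (hd : β ∣ h ^ 2 - 1) :
    m E Q h β * m E Q h β = 1 := by
  obtain ⟨X, hX, rfl, rfl⟩ := exX hW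
  have dX := det2 X
  have h1 := m_of hE hX.inv
  rw [map_inv, m_of hE hX] at h1
  simp only [inv_coe2] at h1
  simp at h1
  obtain ⟨z, hz⟩ := hd
  have h2 : mt X 1 1 = mt X 0 0 + (- (mt X 0 0 * mt X 1 0 - mt X 1 1 * z)) * (- mt X 0 1) := by
    linear_combination mt X 0 0 * dX - mt X 1 1 * hz
  have hWn : W Q (mt X 0 0) (- mt X 0 1) := ⟨hW.1, (dvd_neg (α := R)).2 hW.2.1, hW.2.2.neg_right⟩
  rw [h2, m_adda hE _ hWn] at h1
  have h3 := m_unit hE hW (isUnit_one.neg)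
  rw [neg_one_mul] at h3
  rw [h3] at h1
  nth_rewrite 1 [← h1]
  simp

/-- the power lemma -/
theorem m_pow (hE : HasEl E Q) {X Y : SpecialLinearGroup (Fin 2) R} (hX : InG Q X) (hY : InG Q Y)
    {f g a' : R} (h00 : mt Y 0 0 = f + g * mt X 0 0) (h01 : mt Y 0 1 = g * mt X 0 1) (h10 : mt Y 1 0 = g * mt X 1 0)
    (h11 : mt Y 1 1 = f + g * mt X 1 1) (ha : mt X 0 1 ∣ mt Y 0 0 - a') :
    M E Y ^ 2 = m E Q a' (mt X 0 1) ^ 2 := by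
  have dX := det2 X
  have dY := det2 Y
  have hYW := hY.W
  have hc := hYW.2.2
  rw [h01] at hc
  have Wb : W Q (mt Y 0 0) (mt X 0 1) := ⟨hY.1, hX.2.1, hc.of_mul_right_right⟩
  have hQQ : W Q (mt Y 0 0) Q := by simpa using W.ofQ hY.1 isUnit_one
  have Wg : W Q (mt Y 0 0) (g * Q) := ⟨hY.1, dvd_mul_left _ _, hc.of_mul_right_left.mul_right hQQ.2.2⟩
  have h1 : M E Y = m E Q (mt Y 0 0) (g * Q) * m E Q (mt Y 0 0) (mt X 0 1) := by
    rw [m_of hE hY, ← m_mul hE Wg Wb, ← m_Qmul hE hYW, h01]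
    congr 1; ring
  have hcomm : Commute (m E Q (mt Y 0 0) (g * Q)) (m E Q (mt Y 0 0) (mt X 0 1)) := by
    rw [commute_iff_eq, ← m_mul hE Wg Wb, ← m_mul hE Wb Wg, mul_comm]
  have h2 : m E Q (mt Y 0 0) (g * Q) ^ 2 = 1 := by
    rw [sq]
    apply m_two hE Wg
    have : mt Y 0 0 ^ 2 - 1 = g * (f * ((mt X 0 0 - 1) - (mt X 1 1 - 1)) + g * ((mt X 0 0 - 1) * (mt X 0 0 + 1))) := by
      rw [h00, h01, h10, h11] at dY
      rw [h00]
      linear_combination dY - g ^ 2 * dX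
    rw [this]
    exact mul_dvd_mul_left _ (dvd_add ((dvd_sub hX.1 hX.2.2.2).mul_left _)
      ((hX.1.mul_right _).mul_left _))
  rw [h1, hcomm.mul_pow, h2, one_mul]
  obtain ⟨z, hz⟩ := ha
  have := m_adda hE (-z) Wb
  rw [← this]
  congr 2
  linear_combination hz

theorem m_powT (hE : HasEl E Q) {X Y : SpecialLinearGroup (Fin 2) R} (hX : InG Q X) (hY : InG Q Y)
    {f g a' : R} (h00 : mt Y 0 0 = f + g * mt X 0 0) (h01 : mt Y 0 1 = g * mt X 0 1) (h10 : mt Y 1 0 = g * mt X 1 0)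
    (h11 : mt Y 1 1 = f + g * mt X 1 1) (ha : mt X 1 0 ∣ mt Y 0 0 - a') :
    M E Y ^ 2 = (m E Q a' (mt X 1 0) ^ 2)⁻¹ := by
  have := m_pow hE hX.tr hY.tr (f := f) (g := g) (a' := a') (by simpa using h00) (by simpa using h10)
    (by simpa using h01) (by simpa using h11) (by simpa using ha)
  rw [M_tr hE hY] at this
  have h2 : mt X.transpose 0 1 = mt X 1 0 := rfl
  rw [h2] at this
  rw [← this, inv_pow, inv_inv]

end generic

end Menn

namespace Menn

section arith

/-- `1/2` in `Zhalf` -/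
def half : Zhalf := ⟨(2 : ℚ)⁻¹, Subring.subset_closure rfl⟩

theorem two_half : (2 : Zhalf) * half = 1 := by
  apply Subtype.ext
  change (2 : ℚ) * 2⁻¹ = 1
  norm_num

theorem unit_two : IsUnit (2 : Zhalf) := IsUnit.of_mul_eq_one _ two_half

theorem two_pow_half (k : ℕ) : (2 : Zhalf) ^ k * half ^ k = 1 := by
  rw [← mul_pow, two_half, one_pow]

theorem cast_inj {a b : ℤ} (h : (a : Zhalf) = (b : Zhalf)) : a = b := by
  have := congrArg (Subtype.val) h
  simpa using this

theorem exists_num (x : Zhalf) : ∃ (n : ℤ) (k : ℕ), x * 2 ^ k = (n : Zhalf) := by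
  have key : ∀ y ∈ Zhalf, ∃ (n : ℤ) (k : ℕ), y * 2 ^ k = (n : ℚ) := by
    intro y hy
    refine Subring.closure_induction (p := fun y _ => ∃ (n : ℤ) (k : ℕ), y * 2 ^ k = (n : ℚ))
      ?_ ?_ ?_ ?_ ?_ ?_ hy
    · intro z hz
      rw [Set.mem_singleton_iff] at hz
      exact ⟨1, 1, by rw [hz]; norm_num⟩
    · exact ⟨0, 0, by simp⟩
    · exact ⟨1, 0, by simp⟩
    · rintro a b _ _ ⟨n, k, h⟩ ⟨n', k', h'⟩
      refine ⟨n * 2 ^ k' + n' * 2 ^ k, k + k', ?_⟩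
      push_cast
      rw [← h, ← h']; ring
    · rintro a _ ⟨n, k, h⟩
      exact ⟨-n, k, by push_cast; rw [← h]; ring⟩
    · rintro a b _ _ ⟨n, k, h⟩ ⟨n', k', h'⟩
      refine ⟨n * n', k + k', ?_⟩
      push_cast
      rw [← h, ← h']; ring
  obtain ⟨n, k, h⟩ := key x.1 x.2
  refine ⟨n, k, ?_⟩
  apply Subtype.ext
  push_cast
  exact h

theorem exists_num' (x : Zhalf) : ∃ (n : ℤ) (k : ℕ), x = (n : Zhalf) * half ^ k := by
  obtain ⟨n, k, h⟩ := exists_num x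
  refine ⟨n, k, ?_⟩
  rw [← h, mul_assoc, two_pow_half, mul_one]

theorem exists_odd {x : Zhalf} (hx : x ≠ 0) :
    ∃ (u : Zhalf) (m : ℕ), IsUnit u ∧ Odd m ∧ x = u * m := by
  obtain ⟨n, k, h⟩ := exists_num' x
  have hn : n.natAbs ≠ 0 := by
    intro h0
    apply hx
    rw [h, Int.natAbs_eq_zero.1 h0]; simp
  obtain ⟨j, m, hm, hj⟩ := Nat.exists_eq_two_pow_mul_odd hn
  have hh : IsUnit half := IsUnit.of_mul_eq_one 2 (by rw [mul_comm]; exact two_half)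
  have hs : IsUnit ((n.sign : ℤ) : Zhalf) := by
    rcases lt_trichotomy n 0 with h1 | h1 | h1
    · rw [Int.sign_eq_neg_one_of_neg h1]; simp
    · subst h1; simp at hn
    · rw [Int.sign_eq_one_of_pos h1]; simp
  refine ⟨n.sign * 2 ^ j * half ^ k, m, (hs.mul (unit_two.pow _)).mul (hh.pow _), hm, ?_⟩
  have h2 : (n : Zhalf) = n.sign * (2 ^ j * m) := by
    conv_lhs => rw [← Int.sign_mul_natAbs n, hj]
    push_cast; ring
  rw [h, h2]; ring

theorem red {m : ℕ} (hm : Odd m) (a : Zhalf) : ∃ r : ℤ, (m : Zhalf) ∣ a - r := by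
  obtain ⟨n, k, h⟩ := exists_num' a
  obtain ⟨j, hj⟩ := hm
  refine ⟨n * (j + 1) ^ k, ?_⟩
  have h1 : (m : Zhalf) ∣ half - (j + 1 : Zhalf) := by
    refine ⟨-half, ?_⟩
    rw [hj]; push_cast
    linear_combination ((j : Zhalf) + 1) * two_half
  have h2 := h1.trans (sub_dvd_pow_sub_pow half (j + 1 : Zhalf) k)
  rw [h]; push_cast
  rw [← mul_sub]
  exact h2.mul_left _

theorem cop_int {m : ℕ} (hm : Odd m) {r : ℤ} (h : IsCoprime (r : Zhalf) (m : Zhalf)) :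
    IsCoprime r (m : ℤ) := by
  obtain ⟨x, y, hxy⟩ := h
  obtain ⟨n, k, h1⟩ := exists_num x
  obtain ⟨n', k', h2⟩ := exists_num y
  have h3 : r * (n * 2 ^ k') + m * (n' * 2 ^ k) = 2 ^ (k + k') := by
    apply cast_inj
    push_cast
    rw [← h1, ← h2]
    linear_combination 2 ^ k * 2 ^ k' * hxy
  have h4 : IsCoprime ((2 : ℤ) ^ (k + k')) (m : ℤ) := by
    apply IsCoprime.pow_left
    obtain ⟨j, hj⟩ := hm
    exact ⟨-j, 1, by rw [hj]; push_cast; ring⟩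
  rw [← h3] at h4
  exact (IsCoprime.of_add_mul_left_left h4).of_mul_left_left

theorem cop_cast {a b : ℤ} (h : IsCoprime a b) : IsCoprime (a : Zhalf) (b : Zhalf) := by
  have := h.map (Int.castRingHom Zhalf)
  simpa using this

/-- Dirichlet in `Zhalf`. -/
theorem dirichlet {a b : Zhalf} (h : IsCoprime a b) (hb : b ≠ 0) (B : ℕ) :
    ∃ (t : Zhalf) (p : ℕ), p.Prime ∧ B < p ∧ p % 4 = 3 ∧ (p : Zhalf) = a + t * b := by
  obtain ⟨u, m, hu, hm, rfl⟩ := exists_odd hb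
  have ham : IsCoprime a (m : Zhalf) := h.of_mul_right_right
  obtain ⟨r, z, hz⟩ := red hm a
  have hr : IsCoprime (r : Zhalf) (m : Zhalf) := by
    have : a = r + m * z := by rw [← hz]; ring
    rw [this] at ham
    exact ham.of_add_mul_left_left
  have hr' := cop_int hm hr
  obtain ⟨j, hj⟩ := hm
  have c1 : IsCoprime (r + m * (m * (3 - r))) (m : ℤ) := hr'.add_mul_left_left _
  have c2 : IsCoprime (r + m * (m * (3 - r))) (4 : ℤ) :=
    ⟨-1, 1 + (j ^ 2 + j) * (3 - r), by rw [hj]; push_cast; ring⟩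
  obtain ⟨p, hp1, hp2, hp3⟩ := Nat.forall_exists_prime_gt_and_zmodEq B (q := 4 * m)
    (a := r + m * (m * (3 - r))) (by omega) (by push_cast; exact c2.mul_right c1)
  obtain ⟨v, hv⟩ := hp3.symm.dvd
  have hv2 : (p : ℤ) = r + m * (m * (3 - r)) + 4 * m * v := by push_cast at hv; linarith
  obtain ⟨u', hu'⟩ := hu.exists_right_inv
  refine ⟨u' * (m * (3 - r) + 4 * v - z), p, hp2, hp1, ?_, ?_⟩
  · have : (p : ℤ) = 3 + 4 * ((j ^ 2 + j) * (3 - r) + m * v) := by rw [hv2, hj]; push_cast; ring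
    omega
  · have h5 := congrArg (fun x : ℤ => (x : Zhalf)) hv2
    push_cast at h5
    rw [h5]
    linear_combination (-1 : Zhalf) * hz - (m * (m * (3 - r) + 4 * v - z)) * hu'

theorem odd_of_mod {p : ℕ} (h : p % 4 = 3) : Odd p := by
  rw [Nat.odd_iff]; omega

theorem fourth {p : ℕ} (hp : p.Prime) (h4 : p % 4 = 3) {β : Zhalf} (h : IsCoprime (p : Zhalf) β) :
    ∃ (x s : Zhalf), (s = 1 ∨ s = -1) ∧ IsCoprime (p : Zhalf) x ∧ (p : Zhalf) ∣ β - s * x ^ 4 := by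
  obtain ⟨r, z, hz⟩ := red (odd_of_mod h4) β
  have hr : IsCoprime (r : Zhalf) (p : Zhalf) := by
    have : β = r + p * z := by rw [← hz]; ring
    rw [this] at h
    exact (h.symm).of_add_mul_left_left
  have hr' := cop_int (odd_of_mod h4) hr
  obtain ⟨j, hj⟩ : ∃ j, p = 4 * j + 3 := ⟨p / 4, by omega⟩
  have := Fact.mk hp
  have hr0 : (r : ZMod p) ≠ 0 := by
    intro h0
    rw [ZMod.intCast_zmod_eq_zero_iff_dvd] at h0
    have := hr'.isUnit_of_dvd' h0 dvd_rfl
    rw [Int.isUnit_iff] at this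
    have := hp.one_lt
    omega
  have hs := ZMod.pow_div_two_eq_neg_one_or_one p hr0
  have hdiv : p / 2 = 2 * j + 1 := by omega
  rw [hdiv] at hs
  have key : ∃ s : ℤ, (s = 1 ∨ s = -1) ∧ (p : ℤ) ∣ r - s * (r ^ ((j + 1) ^ 2)) ^ 4 := by
    have e : ∀ ρ : ZMod p, (ρ ^ ((j + 1) ^ 2)) ^ 4 = ρ * (ρ ^ (2 * j + 1)) ^ (2 * j + 3) := by
      intro ρ
      rw [← pow_mul, ← pow_mul, ← pow_succ']
      congr 1; ring
    rcases hs with hs | hs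
    · refine ⟨1, Or.inl rfl, ?_⟩
      rw [← ZMod.intCast_zmod_eq_zero_iff_dvd]
      push_cast
      rw [e, hs]; simp
    · refine ⟨-1, Or.inr rfl, ?_⟩
      rw [← ZMod.intCast_zmod_eq_zero_iff_dvd]
      push_cast
      rw [e, hs, Odd.neg_one_pow ⟨j + 1, by ring⟩]; simp
  obtain ⟨s, hs1, y, hy⟩ := key
  refine ⟨(r : Zhalf) ^ ((j + 1) ^ 2), s, ?_, hr.symm.pow_right, ⟨z + y, ?_⟩⟩
  · rcases hs1 with rfl | rfl <;> simp
  · have h5 := congrArg (fun x : ℤ => (x : Zhalf)) hy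
    push_cast at h5
    linear_combination hz + h5

theorem bound_cop {Q : Zhalf} (hQ : Q ≠ 0) : ∃ B : ℕ, ∀ p : ℕ, p.Prime → B < p →
    IsCoprime Q (p : Zhalf) := by
  obtain ⟨u, m, hu, hm, rfl⟩ := exists_odd hQ
  refine ⟨m, fun p hp hlt => ?_⟩
  have hm0 : 0 < m := hm.pos
  have : Nat.Coprime p m := (Nat.Prime.coprime_iff_not_dvd hp).2 fun hd => by
    have := Nat.le_of_dvd hm0 hd; omega
  have h2 := cop_cast (Nat.isCoprime_iff_coprime.2 this)
  push_cast at h2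
  exact (isCoprime_mul_unit_left_left hu _ _).2 h2.symm

theorem two_primes {p : ℕ} (hp : p.Prime) (h4 : p % 4 = 3) {β : Zhalf}
    (h : IsCoprime (p : Zhalf) β) (B : ℕ) :
    ∃ (u t₁ t₂ : Zhalf) (p₁ p₂ w : ℕ), (u = 1 ∨ u = -1) ∧ p₁.Prime ∧ p₂.Prime ∧ B < p₁ ∧ B < p₂ ∧
      (p₁ : Zhalf) = u * β + t₁ * p ∧ (p₂ : Zhalf) = u * β + t₂ * p ∧
      w * (p₁ - 1) = (p₂ - 1) + 2 := by
  obtain ⟨r, z, hz⟩ := red (odd_of_mod h4) β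
  have hr : IsCoprime (r : Zhalf) (p : Zhalf) := by
    have : β = r + p * z := by rw [← hz]; ring
    rw [this] at h
    exact (h.symm).of_add_mul_left_left
  have hr' := cop_int (odd_of_mod h4) hr
  have hpi : Prime (p : ℤ) := Nat.prime_iff_prime_int.1 hp
  have hu : ∃ u : ℤ, (u = 1 ∨ u = -1) ∧ ¬ (p : ℤ) ∣ u * r - 1 := by
    by_cases h1 : (p : ℤ) ∣ r - 1
    · refine ⟨-1, Or.inr rfl, fun h2 => ?_⟩
      have := dvd_add h1 h2
      have e : r - 1 + (-1 * r - 1) = -2 := by ring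
      rw [e, dvd_neg] at this
      have := Int.le_of_dvd (by norm_num) this
      omega
    · exact ⟨1, Or.inl rfl, by simpa using h1⟩
  obtain ⟨u, hu1, hu2⟩ := hu
  have hur : IsCoprime (u * r) (p : ℤ) := by
    rcases hu1 with rfl | rfl
    · simpa using hr'
    · simpa using hr'.neg_left
  obtain ⟨p₁, hB1, hp1, hm1⟩ := Nat.forall_exists_prime_gt_and_zmodEq (B + 2) (q := p)
    (a := u * r) hp.ne_zero hur
  obtain ⟨v1, hv1⟩ := hm1.symm.dvd
  have hndvd : ¬ (p : ℤ) ∣ (p₁ : ℤ) - 1 := by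
    intro hd
    apply hu2
    have e : u * r - 1 = (p₁ : ℤ) - 1 - p * v1 := by linear_combination (-1) * hv1
    rw [e]
    exact dvd_sub hd (dvd_mul_right _ _)
  obtain ⟨α, γ, hαγ⟩ := (hpi.coprime_iff_not_dvd).2 hndvd
  have c1 : IsCoprime (u * r * (γ * ((p₁ : ℤ) - 1)) - α * p) (p : ℤ) := by
    have : u * r * (γ * ((p₁ : ℤ) - 1)) - α * p = u * r + p * (- u * r * α - α) := by
      linear_combination (u * r) * hαγ
    rw [this]
    exact hur.add_mul_left_left _
  have c2 : IsCoprime (u * r * (γ * ((p₁ : ℤ) - 1)) - α * p) ((p₁ : ℤ) - 1) := by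
    have : u * r * (γ * ((p₁ : ℤ) - 1)) - α * p = -1 + ((p₁ : ℤ) - 1) * (u * r * γ + γ) := by
      linear_combination (-1) * hαγ
    rw [this]
    exact isCoprime_one_left.neg_left.add_mul_left_left _
  have hc : ((p₁ - 1 : ℕ) : ℤ) = (p₁ : ℤ) - 1 := by rw [Nat.cast_sub (by omega)]; simp
  obtain ⟨p₂, hB2, hp2, hm2⟩ := Nat.forall_exists_prime_gt_and_zmodEq (B + 2) (q := p * (p₁ - 1))
    (a := u * r * (γ * ((p₁ : ℤ) - 1)) - α * p) (Nat.mul_ne_zero hp.ne_zero (by omega))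
    (by rw [Nat.cast_mul, hc]; exact c1.mul_right c2)
  obtain ⟨v2, hv2⟩ := hm2.symm.dvd
  rw [Nat.cast_mul, hc] at hv2
  have hw : ((p₁ - 1 : ℕ) : ℤ) ∣ ((p₂ - 1 + 2 : ℕ) : ℤ) := by
    have e : ((p₂ - 1 + 2 : ℕ) : ℤ) = p₂ + 1 := by
      rw [Nat.cast_add, Nat.cast_sub (by omega)]; push_cast; ring
    rw [hc, e]
    refine ⟨u * r * γ + γ + p * v2, ?_⟩
    linear_combination hv2 - hαγ
  rw [Int.natCast_dvd_natCast] at hw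
  obtain ⟨w, hw⟩ := hw
  have h5 := congrArg (fun x : ℤ => (x : Zhalf)) hv1
  have h6 := congrArg (fun x : ℤ => (x : Zhalf)) hv2
  have h7 := congrArg (fun x : ℤ => (x : Zhalf)) hαγ
  push_cast at h5 h6 h7
  refine ⟨u, v1 - u * z, - u * r * α - α + ((p₁ : Zhalf) - 1) * v2 - u * z, p₁, p₂, w, ?_, hp1, hp2, by omega,
    by omega, ?_, ?_, ?_⟩
  · rcases hu1 with rfl | rfl <;> simp
  · linear_combination h5 - u * hz
  · linear_combination h6 - u * hz + u * r * h7
  · rw [hw, mul_comm]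

theorem fermat {p p₁ : ℕ} (hp1 : p₁.Prime) (h : IsCoprime (p : Zhalf) (p₁ : Zhalf)) (ho : Odd p₁) (k : ℕ) :
    (p₁ : Zhalf) ∣ (p : Zhalf) ^ (k * (p₁ - 1)) - 1 := by
  have h1 : IsCoprime (p : ℤ) (p₁ : ℤ) := cop_int ho (by push_cast; exact h)
  have h2 := ((Int.ModEq.pow_card_sub_one_eq_one hp1 h1).pow k).symm.dvd
  obtain ⟨v, hv⟩ := h2
  have h5 := congrArg (fun x : ℤ => (x : Zhalf)) hv
  push_cast at h5
  refine ⟨v, ?_⟩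
  rw [← h5, mul_comm k, pow_mul]; simp

theorem gcd_ex (x y : Zhalf) : ∃ g x' y' : Zhalf, x = g * x' ∧ y = g * y' ∧ IsCoprime x' y' := by
  obtain ⟨n, k, h⟩ := exists_num' x
  obtain ⟨n', k', h'⟩ := exists_num' y
  have hh : IsUnit half := IsUnit.of_mul_eq_one 2 (by rw [mul_comm]; exact two_half)
  obtain ⟨a, b, ha, hb, hab⟩ := extract_gcd n n'
  rw [gcd_isUnit_iff] at hab
  have h5 := congrArg (fun x : ℤ => (x : Zhalf)) ha
  have h6 := congrArg (fun x : ℤ => (x : Zhalf)) hb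
  push_cast at h5 h6
  refine ⟨((gcd n n' : ℤ) : Zhalf), half ^ k * a, half ^ k' * b, ?_, ?_, ?_⟩
  · rw [h]; linear_combination half ^ k * h5
  · rw [h']; linear_combination half ^ k' * h6
  · exact (isCoprime_mul_unit_left_left (hh.pow k) _ _).2
      ((isCoprime_mul_unit_left_right (hh.pow k') _ _).2 (cop_cast hab))

theorem stable {a₁ a₂ a₃ x y z : Zhalf} (h : x * a₁ + y * a₂ + z * a₃ = 1) :
    ∃ s t : Zhalf, IsCoprime (a₁ + t * a₃) (a₂ + s * a₃) := by
  by_cases h3 : a₃ = 0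
  · refine ⟨0, 0, x, y, ?_⟩
    rw [h3] at h ⊢
    linear_combination h
  obtain ⟨s, hs⟩ : ∃ s : Zhalf, a₂ + s * a₃ ≠ 0 := by
    by_cases h2 : a₂ = 0
    · exact ⟨1, by rw [h2]; simpa using h3⟩
    · exact ⟨0, by simpa using h2⟩
  obtain ⟨B, hB⟩ := bound_cop hs
  obtain ⟨g, a, c, ha, hc, hac⟩ := gcd_ex a₁ a₃
  have hc0 : c ≠ 0 := by
    rintro rfl
    exact h3 (by rw [hc, mul_zero])
  obtain ⟨t, p, hp, hlt, -, hpe⟩ := dirichlet hac hc0 B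
  refine ⟨s, t, ?_⟩
  have e : a₁ + t * a₃ = g * p := by rw [hpe, ha, hc]; ring
  rw [e]
  refine IsCoprime.mul_left ?_ (hB p hp hlt).symm
  refine ⟨x * a + (z - y * s) * c, y, ?_⟩
  rw [← h]
  rw [ha, hc]; ring

end arith

end Menn

open Matrix
namespace Menn

section powers

variable {A : Type*} [CommRing A]

theorem pow_ex (X : SpecialLinearGroup (Fin 2) A) (k : ℕ) : ∃ f g : A,
    mt (X ^ k) 0 0 = f + g * mt X 0 0 ∧ mt (X ^ k) 0 1 = g * mt X 0 1 ∧
    mt (X ^ k) 1 0 = g * mt X 1 0 ∧ mt (X ^ k) 1 1 = f + g * mt X 1 1 := by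
  have dX := det2 X
  induction k with
  | zero => exact ⟨1, 0, by simp⟩
  | succ k ih =>
    obtain ⟨f, g, h1, h2, h3, h4⟩ := ih
    refine ⟨-g, f + g * (mt X 0 0 + mt X 1 1), ?_⟩
    simp only [pow_succ, mt_mul, Matrix.mul_apply, Fin.sum_univ_two, h1, h2, h3, h4]
    refine ⟨?_, ?_, ?_, ?_⟩
    · linear_combination (-g) * dX
    · ring
    · ring
    · linear_combination (-g) * dX

theorem pow_dvd01 (X : SpecialLinearGroup (Fin 2) A) (k : ℕ) :
    mt X 0 1 ∣ mt (X ^ k) 0 0 - mt X 0 0 ^ k := by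
  induction k with
  | zero => simp
  | succ k ih =>
    obtain ⟨f, g, h1, h2, h3, h4⟩ := pow_ex X k
    obtain ⟨z, hz⟩ := ih
    rw [pow_succ, mt_mul, Matrix.mul_apply, Fin.sum_univ_two, h2]
    exact ⟨z * mt X 0 0 + g * mt X 1 0, by linear_combination mt X 0 0 * hz⟩

theorem pow_dvd10 (X : SpecialLinearGroup (Fin 2) A) (k : ℕ) :
    mt X 1 0 ∣ mt (X ^ k) 0 0 - mt X 0 0 ^ k := by
  induction k with
  | zero => simp
  | succ k ih =>
    obtain ⟨z, hz⟩ := ih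
    rw [pow_succ, mt_mul, Matrix.mul_apply, Fin.sum_univ_two]
    exact ⟨z * mt X 0 0 + mt (X ^ k) 0 1, by linear_combination mt X 0 0 * hz⟩

theorem pi_dvd {x y : ℕ → A} (h : ∀ n, x n ∣ y n) : x ∣ y := by
  choose z hz using h
  exact ⟨z, funext hz⟩

theorem dvd_pi {x y : ℕ → A} (h : x ∣ y) (n : ℕ) : x n ∣ y n := by
  obtain ⟨z, rfl⟩ := h
  exact ⟨z n, rfl⟩

theorem pi_cop {x y : ℕ → A} (h : ∀ n, IsCoprime (x n) (y n)) : IsCoprime x y := by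
  choose u v huv using h
  exact ⟨u, v, funext huv⟩

theorem cop_pi {x y : ℕ → A} (h : IsCoprime x y) (n : ℕ) : IsCoprime (x n) (y n) := by
  obtain ⟨u, v, huv⟩ := h
  exact ⟨u n, v n, congrFun huv n⟩

/-- assemble a sequence of matrices -/
def pack (Y : ℕ → SpecialLinearGroup (Fin 2) A) : SpecialLinearGroup (Fin 2) (ℕ → A) :=
  mk2 (fun n => mt (Y n) 0 0) (fun n => mt (Y n) 0 1) (fun n => mt (Y n) 1 0)
    (fun n => mt (Y n) 1 1) (funext fun n => det2 (Y n))

/-- component -/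
def pt (X : SpecialLinearGroup (Fin 2) (ℕ → A)) (n : ℕ) : SpecialLinearGroup (Fin 2) A :=
  mk2 (mt X 0 0 n) (mt X 0 1 n) (mt X 1 0 n) (mt X 1 1 n) (congrFun (det2 X) n)

theorem pack_mul (Y Z : ℕ → SpecialLinearGroup (Fin 2) A) :
    pack (fun n => Y n * Z n) = pack Y * pack Z := by
  apply sl_ext
  simp only [mt_mul, pack, mk2_coe]
  ext i j n
  fin_cases i <;> fin_cases j <;> simp [Matrix.mul_apply, Fin.sum_univ_succ]

theorem pack_pt (X : SpecialLinearGroup (Fin 2) (ℕ → A)) : pack (pt X) = X := by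
  apply sl_ext
  simp only [pack, pt, mk2_coe]
  ext i j n
  fin_cases i <;> fin_cases j <;> rfl

def pw (X : SpecialLinearGroup (Fin 2) (ℕ → A)) (k : ℕ → ℕ) : SpecialLinearGroup (Fin 2) (ℕ → A) :=
  pack (fun n => pt X n ^ k n)

theorem pw_add (X : SpecialLinearGroup (Fin 2) (ℕ → A)) (k l : ℕ → ℕ) :
    pw X (fun n => k n + l n) = pw X k * pw X l := by
  unfold pw
  rw [← pack_mul]
  simp only [pow_add]

theorem pw_two (X : SpecialLinearGroup (Fin 2) (ℕ → A)) : pw X (fun _ => 2) = X ^ 2 := by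
  have := pack_mul (pt X) (pt X)
  rw [pack_pt] at this
  rw [sq, ← this]
  simp only [pw, sq]

theorem pw_ex (X : SpecialLinearGroup (Fin 2) (ℕ → A)) (k : ℕ → ℕ) : ∃ f g : ℕ → A,
    mt (pw X k) 0 0 = f + g * mt X 0 0 ∧ mt (pw X k) 0 1 = g * mt X 0 1 ∧
    mt (pw X k) 1 0 = g * mt X 1 0 ∧ mt (pw X k) 1 1 = f + g * mt X 1 1 := by
  choose f g h using fun n => pow_ex (pt X n) (k n)
  exact ⟨f, g, funext fun n => (h n).1, funext fun n => (h n).2.1, funext fun n => (h n).2.2.1,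
    funext fun n => (h n).2.2.2⟩

theorem pw_dvd01 (X : SpecialLinearGroup (Fin 2) (ℕ → A)) (k : ℕ → ℕ) :
    mt X 0 1 ∣ mt (pw X k) 0 0 - fun n => mt X 0 0 n ^ k n :=
  pi_dvd fun n => pow_dvd01 (pt X n) (k n)

theorem pw_dvd10 (X : SpecialLinearGroup (Fin 2) (ℕ → A)) (k : ℕ → ℕ) :
    mt X 1 0 ∣ mt (pw X k) 0 0 - fun n => mt X 0 0 n ^ k n :=
  pi_dvd fun n => pow_dvd10 (pt X n) (k n)

theorem pw_InG {Q : ℕ → A} {X : SpecialLinearGroup (Fin 2) (ℕ → A)} (hX : InG Q X) (k : ℕ → ℕ) :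
    InG Q (pw X k) := by
  have h1 : ∀ n, InG (Q n) (pt X n) := fun n =>
    ⟨dvd_pi hX.1 n, dvd_pi hX.2.1 n, dvd_pi hX.2.2.1 n, dvd_pi hX.2.2.2 n⟩
  have h2 := fun n => (h1 n).pow (k n)
  exact ⟨pi_dvd fun n => (h2 n).1, pi_dvd fun n => (h2 n).2.1, pi_dvd fun n => (h2 n).2.2.1,
    pi_dvd fun n => (h2 n).2.2.2⟩

end powers

section main

variable {E : Subgroup (SpecialLinearGroup (Fin 3) (ℕ → Zhalf))} [hn : E.Normal] {Q : ℕ → Zhalf}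

theorem exp4 (hE : HasEl E Q) (hQ : ∀ n, Q n ≠ 0) {p : ℕ → ℕ} (hp : ∀ n, (p n).Prime)
    (h4 : ∀ n, p n % 4 = 3) {β : ℕ → Zhalf} (hW : W Q (fun n => (p n : Zhalf)) (Q * β)) :
    m E Q (fun n => (p n : Zhalf)) (Q * β) ^ 4 = 1 := by
  have hcop : ∀ n, IsCoprime (p n : Zhalf) (β n) := fun n => cop_pi hW.2.2.of_mul_right_right n
  have hcopQ : ∀ n, IsCoprime (p n : Zhalf) (Q n) := fun n => cop_pi hW.2.2.of_mul_right_left n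
  choose B hB using fun n => bound_cop (hQ n)
  choose u t₁ t₂ p₁ p₂ w hu hp1 hp2 hB1 hB2 e1 e2 hw using
    fun n => two_primes (hp n) (h4 n) (hcop n) (B n + 2)
  obtain ⟨a, ha⟩ : ∃ a : ℕ → Zhalf, a = fun n => (p n : Zhalf) := ⟨_, rfl⟩
  rw [← ha] at hW ⊢
  have hu1 : IsUnit u := by
    refine IsUnit.of_mul_eq_one u ?_
    funext n
    rcases hu n with h | h <;> simp [h]
  obtain ⟨P₁, hP1⟩ : ∃ P : ℕ → Zhalf, P = fun n => (p₁ n : Zhalf) := ⟨_, rfl⟩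
  obtain ⟨P₂, hP2⟩ : ∃ P : ℕ → Zhalf, P = fun n => (p₂ n : Zhalf) := ⟨_, rfl⟩
  have E1 : P₁ = u * β + t₁ * a := by rw [hP1, ha]; exact funext e1
  have E2 : P₂ = u * β + t₂ * a := by rw [hP2, ha]; exact funext e2
  have hub : W Q a (u * (Q * β)) :=
    ⟨hW.1, hW.2.1.mul_left _, (isCoprime_mul_unit_left_right hu1 _ _).2 hW.2.2⟩
  have hW1 : W Q a (Q * P₁) := by
    have := hub.addb (t := Q * t₁) (dvd_mul_right _ _)
    convert this using 1
    rw [E1]; ring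
  have hm1 : m E Q a (Q * P₁) = m E Q a (Q * β) := by
    have := m_addb hE hub (t := Q * t₁) (dvd_mul_right _ _)
    rw [m_unit hE hW hu1] at this
    rw [← this]
    congr 1
    rw [E1]; ring
  obtain ⟨X, hX, hX0, hX1⟩ := exX hW1
  obtain ⟨T, hT⟩ : ∃ T : SpecialLinearGroup (Fin 2) (ℕ → Zhalf), T = mk2 1 (Q * (t₂ - t₁)) 0 1 (by ring) :=
    ⟨_, rfl⟩
  have hTG : InG Q T := by
    rw [hT]; simp [InG, mk2_coe]
  have hX2 : InG Q (X * T) := hX.mul hTG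
  have h00 : mt (X * T) 0 0 = a := by
    simp [mt_mul, hT, mk2_coe, Matrix.mul_apply, hX0]
  have h01 : mt (X * T) 0 1 = Q * P₂ := by
    simp [mt_mul, hT, mk2_coe, Matrix.mul_apply, hX0, hX1]
    rw [E1, E2]; ring
  have h10 : mt (X * T) 1 0 = mt X 1 0 := by
    simp [mt_mul, hT, mk2_coe, Matrix.mul_apply]
  -- divisibility
  have hdiv : ∀ (q : ℕ → ℕ) (v : ℕ → ℕ), (∀ n, (q n).Prime) → (∀ n, B n + 2 < q n) →
      (∀ n, IsCoprime (p n : Zhalf) (q n : Zhalf)) →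
      (Q * fun n => (q n : Zhalf)) ∣ (fun n => a n ^ (v n * (q n - 1))) - 1 := by
    intro q v hq hBq hc
    refine pi_dvd fun n => ?_
    refine IsCoprime.mul_dvd (hB n _ (hq n) (by have := hBq n; omega)) ?_ ?_
    · have h1 : Q n ∣ a n - 1 := dvd_pi hW.1 n
      refine h1.trans ?_
      have := sub_dvd_pow_sub_pow (a n) 1 (v n * (q n - 1))
      rw [one_pow] at this
      exact this
    · have ho : Odd (q n) := (hq n).odd_of_ne_two (by have := hBq n; omega)
      have := fermat (hq n) (hc n) ho (v n)
      rw [ha]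
      exact this
  have hc1 : ∀ n, IsCoprime (p n : Zhalf) (p₁ n : Zhalf) := fun n => by
    rw [e1 n]
    refine IsCoprime.add_mul_right_right ?_ _
    rcases hu n with h | h
    · rw [h, one_mul]; exact hcop n
    · rw [h, neg_one_mul]; exact (hcop n).neg_right
  have hc2 : ∀ n, IsCoprime (p n : Zhalf) (p₂ n : Zhalf) := fun n => by
    rw [e2 n]
    refine IsCoprime.add_mul_right_right ?_ _
    rcases hu n with h | h
    · rw [h, one_mul]; exact hcop n
    · rw [h, neg_one_mul]; exact (hcop n).neg_right
  have d1 := hdiv p₁ w hp1 hB1 hc1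
  have d2 := hdiv p₂ (fun _ => 1) hp2 hB2 hc2
  rw [← hP1] at d1
  rw [← hP2] at d2
  simp only [one_mul] at d2
  -- first power
  have r1 : M E (pw X (fun n => w n * (p₁ n - 1))) ^ 2 = 1 := by
    obtain ⟨f, g, g1, g2, g3, g4⟩ := pw_ex X (fun n => w n * (p₁ n - 1))
    have dd := pw_dvd01 X (fun n => w n * (p₁ n - 1))
    rw [hX0] at dd
    have := m_pow hE hX (pw_InG hX _) (a' := 1) g1 g2 g3 g4 (by
      have d3 := dvd_add dd (hX1.dvd.trans d1)
      rwa [sub_add_sub_cancel] at d3)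
    rw [this, m_one hE hX.2.1, one_pow]
  have r2 : M E (pw (X * T) (fun n => (p₂ n - 1))) ^ 2 = 1 := by
    obtain ⟨f, g, g1, g2, g3, g4⟩ := pw_ex (X * T) (fun n => (p₂ n - 1))
    have dd := pw_dvd01 (X * T) (fun n => (p₂ n - 1))
    rw [h00] at dd
    have := m_pow hE hX2 (pw_InG hX2 _) (a' := 1) g1 g2 g3 g4 (by
      have d3 := dvd_add dd (h01.dvd.trans d2)
      rwa [sub_add_sub_cancel] at d3)
    rw [this, m_one hE hX2.2.1, one_pow]
  have r3 : M E (pw X (fun n => (p₂ n - 1))) ^ 2 = 1 := by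
    obtain ⟨f, g, g1, g2, g3, g4⟩ := pw_ex (X * T) (fun n => (p₂ n - 1))
    obtain ⟨f', g', g1', g2', g3', g4'⟩ := pw_ex X (fun n => (p₂ n - 1))
    have s1 := m_powT hE hX2 (pw_InG hX2 _) g1 g2 g3 g4 (pw_dvd10 (X * T) _)
    have s2 := m_powT hE hX (pw_InG hX _) g1' g2' g3' g4' (pw_dvd10 X _)
    rw [h00, h10] at s1
    rw [hX0] at s2
    rw [s2, ← s1, r2]
  have f1 : pw X (fun n => w n * (p₁ n - 1)) = pw X (fun n => (p₂ n - 1)) * X ^ 2 := by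
    rw [← pw_two, ← pw_add]
    congr 1
    exact funext hw
  have f2 : pw X (fun n => w n * (p₁ n - 1)) = X ^ 2 * pw X (fun n => (p₂ n - 1)) := by
    rw [← pw_two, ← pw_add]
    congr 1
    funext n
    rw [hw n, add_comm]
  have hcomm : Commute (M E (pw X (fun n => (p₂ n - 1)))) (M E (X ^ 2)) := by
    rw [commute_iff_eq, ← map_mul, ← map_mul, ← f1, ← f2]
  rw [f1, map_mul, hcomm.mul_pow, r3, one_mul, map_pow, ← pow_mul] at r1
  rw [m_of hE hX, hX0, hX1, hm1] at r1
  exact r1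

theorem m_triv (hE : HasEl E Q) (hQ : ∀ n, Q n ≠ 0) {a b : ℕ → Zhalf} (h : W Q a b) :
    m E Q a b = 1 := by
  classical
  obtain ⟨v, hv⟩ : ∃ v : ℕ → Zhalf, ∀ n, b n + Q n * v n * a n ≠ 0 := by
    refine ⟨fun n => if b n = 0 then 1 else 0, fun n => ?_⟩
    by_cases hb : b n = 0
    · have hc := cop_pi h.2.2 n
      rw [hb, isCoprime_zero_right] at hc
      simp only [hb, if_true, mul_one, zero_add]
      exact mul_ne_zero (hQ n) hc.ne_zero
    · simpa [hb] using hb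
  have hW' := h.addb (t := Q * v) (dvd_mul_right _ _)
  rw [← m_addb hE h (t := Q * v) (dvd_mul_right _ _)]
  obtain ⟨b', hb'⟩ : ∃ b', b' = b + Q * v * a := ⟨_, rfl⟩
  rw [← hb'] at hW' ⊢
  have hb0 : ∀ n, b' n ≠ 0 := by rw [hb']; exact hv
  choose t p hp _ h4 hpe using fun n => dirichlet (cop_pi hW'.2.2 n) (hb0 n) 0
  have hpa : (fun n => (p n : Zhalf)) = a + t * b' := funext hpe
  rw [← m_adda hE t hW', ← hpa]
  have hWp := hW'.adda t
  rw [← hpa] at hWp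
  obtain ⟨P, hP⟩ : ∃ P : ℕ → Zhalf, P = fun n => (p n : Zhalf) := ⟨_, rfl⟩
  obtain ⟨β, hβ⟩ := hWp.2.1
  rw [hβ] at hWp ⊢
  have hcop : ∀ n, IsCoprime (p n : Zhalf) (β n) := fun n => cop_pi hWp.2.2.of_mul_right_right n
  choose x s hs hx hd using fun n => fourth (hp n) (h4 n) (hcop n)
  choose y hy using hd
  have hWx : W Q (fun n => (p n : Zhalf)) (Q * x) :=
    ⟨hWp.1, dvd_mul_right _ _, hWp.2.2.of_mul_right_left.mul_right (pi_cop hx)⟩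
  have key := exp4 hE hQ hp h4 hWx
  rw [← hP] at hWp key hWx ⊢
  have hcx : IsCoprime P x := hWx.2.2.of_mul_right_right
  have hcQ : IsCoprime P Q := hWx.2.2.of_mul_right_left
  have hWx4 : W Q P (Q * x ^ 4) := ⟨hWp.1, dvd_mul_right _ _, hcQ.mul_right hcx.pow_right⟩
  have hsu : IsUnit s := by
    refine IsUnit.of_mul_eq_one s ?_
    funext n
    rcases hs n with h | h <;> simp [h]
  have hWs : W Q P (s * (Q * x ^ 4)) :=
    ⟨hWp.1, hWx4.2.1.mul_left _, (isCoprime_mul_unit_left_right hsu _ _).2 hWx4.2.2⟩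
  have e : Q * β = s * (Q * x ^ 4) + Q * y * P := by
    have : β - s * x ^ 4 = P * y := by rw [hP]; exact funext hy
    linear_combination Q * this
  rw [e, m_addb hE hWs (dvd_mul_right _ _), m_unit hE hWx4 hsu, ← key]
  have hW2 : W Q P (Q * x * (Q * x)) := hWx.mul hWx
  have w1 : W Q P (Q * (Q * x ^ 4)) := ⟨hWp.1, dvd_mul_right _ _, hcQ.mul_right hWx4.2.2⟩
  have w2 : W Q P (Q * (Q * (Q * x ^ 4))) := ⟨hWp.1, dvd_mul_right _ _, hcQ.mul_right w1.2.2⟩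
  have k1 : m E Q P (Q * x) ^ 4 = m E Q P (Q * (Q * (Q * (Q * x ^ 4)))) := by
    have : Q * (Q * (Q * (Q * x ^ 4))) = (Q * x * (Q * x)) * (Q * x * (Q * x)) := by ring
    rw [this, m_mul hE hW2 hW2, m_mul hE hWx hWx]
    simp only [pow_succ, pow_zero, one_mul, mul_assoc]
  rw [k1, m_Qmul hE w2, m_Qmul hE w1, m_Qmul hE hWx4]

theorem M_triv (hE : HasEl E Q) (hQ : ∀ n, Q n ≠ 0) {X : SpecialLinearGroup (Fin 2) (ℕ → Zhalf)}
    (hX : InG Q X) : M E X = 1 := by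
  rw [m_of hE hX]
  exact m_triv hE hQ hX.W

end main

end Menn

open Matrix
namespace Menn
open scoped commutatorElement

section cong
variable {R : Type*} [CommRing R]

theorem mem_cong {I : Ideal R} {g : SpecialLinearGroup (Fin 3) R} :
    g ∈ SL3Congruence R I ↔ ∀ i j, mt g i j - (1 : Matrix (Fin 3) (Fin 3) R) i j ∈ I := by
  unfold SL3Congruence
  rw [MonoidHom.mem_ker]
  constructor
  · intro h i j
    have h1 : mt (SpecialLinearGroup.map (Ideal.Quotient.mk I) g) i j = mt (1 : SpecialLinearGroup (Fin 3) (R ⧸ I)) i j := by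
      rw [h]
    rw [← Ideal.Quotient.eq]
    have h2 : Ideal.Quotient.mk I (mt g i j) = (1 : Matrix (Fin 3) (Fin 3) (R ⧸ I)) i j := h1
    rw [h2, Matrix.one_apply, Matrix.one_apply]
    split_ifs <;> simp
  · intro h
    apply sl_ext
    ext i j
    have h1 := (Ideal.Quotient.eq).2 (h i j)
    change Ideal.Quotient.mk I (mt g i j) = (1 : Matrix (Fin 3) (Fin 3) (R ⧸ I)) i j
    rw [h1, Matrix.one_apply, Matrix.one_apply]
    split_ifs <;> simp

instance cong_normal (I : Ideal R) : (SL3Congruence R I).Normal := by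
  unfold SL3Congruence
  infer_instance

theorem mem_congQ {Q : R} {g : SpecialLinearGroup (Fin 3) R} :
    g ∈ SL3Congruence R (Ideal.span {Q}) ↔
      ∀ i j, Q ∣ mt g i j - (1 : Matrix (Fin 3) (Fin 3) R) i j := by
  simp only [mem_cong, Ideal.mem_span_singleton]

theorem cong_hasEl (Q : R) : HasEl (SL3Congruence R (Ideal.span {Q})) Q := by
  constructor <;> intro x hx <;> rw [mem_congQ] <;> intro i j <;>
    fin_cases i <;> fin_cases j <;>
    simp [e12_coe, e13_coe, e21_coe, e23_coe, e31_coe, e32_coe, hx]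

theorem cong_B12 {Q : R} {X : SpecialLinearGroup (Fin 2) R} (hX : InG Q X) :
    B12 X ∈ SL3Congruence R (Ideal.span {Q}) := by
  rw [mem_congQ]
  intro i j
  fin_cases i <;> fin_cases j <;> simp [B12_coe, hX.1, hX.2.1, hX.2.2.1, hX.2.2.2]

theorem c12 (a b : R) : e12 (a * b) = ⁅e13 a, e32 b⁆ := by
  rw [commutatorElement_def, eq_mul_inv_iff_mul_eq, eq_mul_inv_iff_mul_eq]
  apply sl_ext
  simp only [mt_mul, e12_coe, e13_coe, e21_coe, e23_coe, e31_coe, e32_coe]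
  ext i j
  fin_cases i <;> fin_cases j <;> simp [Matrix.mul_apply, Fin.sum_univ_succ]

theorem c13 (a b : R) : e13 (a * b) = ⁅e12 a, e23 b⁆ := by
  rw [commutatorElement_def, eq_mul_inv_iff_mul_eq, eq_mul_inv_iff_mul_eq]
  apply sl_ext
  simp only [mt_mul, e12_coe, e13_coe, e21_coe, e23_coe, e31_coe, e32_coe]
  ext i j
  fin_cases i <;> fin_cases j <;> simp [Matrix.mul_apply, Fin.sum_univ_succ]

theorem c21 (a b : R) : e21 (a * b) = ⁅e23 a, e31 b⁆ := by
  rw [commutatorElement_def, eq_mul_inv_iff_mul_eq, eq_mul_inv_iff_mul_eq]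
  apply sl_ext
  simp only [mt_mul, e12_coe, e13_coe, e21_coe, e23_coe, e31_coe, e32_coe]
  ext i j
  fin_cases i <;> fin_cases j <;> simp [Matrix.mul_apply, Fin.sum_univ_succ]

theorem c23 (a b : R) : e23 (a * b) = ⁅e21 a, e13 b⁆ := by
  rw [commutatorElement_def, eq_mul_inv_iff_mul_eq, eq_mul_inv_iff_mul_eq]
  apply sl_ext
  simp only [mt_mul, e12_coe, e13_coe, e21_coe, e23_coe, e31_coe, e32_coe]
  ext i j
  fin_cases i <;> fin_cases j <;> simp [Matrix.mul_apply, Fin.sum_univ_succ]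

theorem c31 (a b : R) : e31 (a * b) = ⁅e32 a, e21 b⁆ := by
  rw [commutatorElement_def, eq_mul_inv_iff_mul_eq, eq_mul_inv_iff_mul_eq]
  apply sl_ext
  simp only [mt_mul, e12_coe, e13_coe, e21_coe, e23_coe, e31_coe, e32_coe]
  ext i j
  fin_cases i <;> fin_cases j <;> simp [Matrix.mul_apply, Fin.sum_univ_succ]

theorem c32 (a b : R) : e32 (a * b) = ⁅e31 a, e12 b⁆ := by
  rw [commutatorElement_def, eq_mul_inv_iff_mul_eq, eq_mul_inv_iff_mul_eq]
  apply sl_ext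
  simp only [mt_mul, e12_coe, e13_coe, e21_coe, e23_coe, e31_coe, e32_coe]
  ext i j
  fin_cases i <;> fin_cases j <;> simp [Matrix.mul_apply, Fin.sum_univ_succ]

theorem comm_hasEl (q : R) : HasEl ⁅SL3Congruence R (Ideal.span {q}), SL3Congruence R (Ideal.span {q})⁆
    (q ^ 2) := by
  have h := cong_hasEl q
  constructor <;> rintro _ ⟨r, rfl⟩ <;> rw [sq, mul_assoc]
  · rw [c12]; exact Subgroup.commutator_mem_commutator (h.h13 _ dvd_rfl) (h.h32 _ (dvd_mul_right _ _))
  · rw [c13]; exact Subgroup.commutator_mem_commutator (h.h12 _ dvd_rfl) (h.h23 _ (dvd_mul_right _ _))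
  · rw [c21]; exact Subgroup.commutator_mem_commutator (h.h23 _ dvd_rfl) (h.h31 _ (dvd_mul_right _ _))
  · rw [c23]; exact Subgroup.commutator_mem_commutator (h.h21 _ dvd_rfl) (h.h13 _ (dvd_mul_right _ _))
  · rw [c31]; exact Subgroup.commutator_mem_commutator (h.h32 _ dvd_rfl) (h.h21 _ (dvd_mul_right _ _))
  · rw [c32]; exact Subgroup.commutator_mem_commutator (h.h31 _ dvd_rfl) (h.h12 _ (dvd_mul_right _ _))

end cong

section reduce

variable {E : Subgroup (SpecialLinearGroup (Fin 3) (ℕ → Zhalf))} [hn : E.Normal] {Q : ℕ → Zhalf}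

theorem mem_of_cl {g : SpecialLinearGroup (Fin 3) (ℕ → Zhalf)} (h : cl E g = 1) : g ∈ E :=
  (QuotientGroup.eq_one_iff g).1 h

theorem stepA (hE : HasEl E Q) (hQ : ∀ n, Q n ≠ 0) {g : SpecialLinearGroup (Fin 3) (ℕ → Zhalf)}
    (hg : g ∈ SL3Congruence _ (Ideal.span {Q})) (h0 : mt g 0 0 = 1) (h1 : mt g 0 1 = 0)
    (h2 : mt g 0 2 = 0) : g ∈ E := by
  rw [mem_congQ] at hg
  have hd : det (mt g) = 1 := g.2
  rw [det_fin_three, h0, h1, h2] at hd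
  obtain ⟨Y, hY⟩ : ∃ Y, Y = mk2 (mt g 1 1) (mt g 1 2) (mt g 2 1) (mt g 2 2)
    (by linear_combination hd) := ⟨_, rfl⟩
  have hYG : InG Q Y := by
    rw [hY]
    have g11 := hg 1 1
    have g12 := hg 1 2
    have g21 := hg 2 1
    have g22 := hg 2 2
    simp at g11 g12 g21 g22
    simp [InG, mk2_coe, g11, g12, g21, g22]
  have key : g = e21 (mt g 1 0) * e31 (mt g 2 0) * B23 Y := by
    apply sl_ext
    simp only [mt_mul, e21_coe, e31_coe, B23_coe, hY, mk2_coe]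
    ext i j : 2
    fin_cases i <;> fin_cases j <;> simp [Matrix.mul_apply, Fin.sum_univ_succ, h0, h1, h2]
  have g10 := hg 1 0
  have g20 := hg 2 0
  simp at g10 g20
  apply mem_of_cl
  rw [key, map_mul, map_mul, cl_one (hE.h21 _ g10), cl_one (hE.h31 _ g20), cl_B23 hE hYG,
    M_triv hE hQ hYG]
  simp

theorem stepB (hE : HasEl E Q) (hQ : ∀ n, Q n ≠ 0) {g : SpecialLinearGroup (Fin 3) (ℕ → Zhalf)}
    (hg : g ∈ SL3Congruence _ (Ideal.span {Q})) (hc : IsCoprime (mt g 0 0) (mt g 0 1))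
    (h2 : mt g 0 2 = 0) : g ∈ E := by
  have hg' := mem_congQ.1 hg
  have g00 := hg' 0 0
  have g01 := hg' 0 1
  simp at g00 g01
  obtain ⟨X, hX, hX0, hX1⟩ := exX (Q := Q) ⟨g00, g01, hc⟩
  have dX := det2 X
  have hm : g * B12 X⁻¹ ∈ E := by
    apply stepA hE hQ (mul_mem hg (cong_B12 hX.inv))
    · simp [mt_mul, Matrix.mul_apply, Fin.sum_univ_succ, B12_coe, inv_coe2]
      rw [← hX0, ← hX1]; linear_combination dX
    · simp [mt_mul, Matrix.mul_apply, Fin.sum_univ_succ, B12_coe, inv_coe2]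
      rw [← hX0, ← hX1]; ring
    · simp [mt_mul, Matrix.mul_apply, Fin.sum_univ_succ, B12_coe, inv_coe2]
      exact h2
  have hB : B12 X⁻¹ ∈ E := mem_of_cl (M_triv hE hQ hX.inv)
  exact (Subgroup.mul_mem_cancel_right E hB).1 hm

theorem stepC (hE : HasEl E Q) (hQ : ∀ n, Q n ≠ 0) {g : SpecialLinearGroup (Fin 3) (ℕ → Zhalf)}
    (hg : g ∈ SL3Congruence _ (Ideal.span {Q})) (hc : IsCoprime (mt g 0 0) (mt g 0 1)) : g ∈ E := by
  have hg' := mem_congQ.1 hg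
  have g02 := hg' 0 2
  simp at g02
  obtain ⟨x, y, hxy⟩ := id hc
  have d1 : Q ∣ - mt g 0 2 * x := (g02.neg_right).mul_right _
  have d2 : Q ∣ - mt g 0 2 * y := (g02.neg_right).mul_right _
  have hC := cong_hasEl Q
  have hm : g * (e13 (- mt g 0 2 * x) * e23 (- mt g 0 2 * y)) ∈ E := by
    have r0 : mt (g * (e13 (- mt g 0 2 * x) * e23 (- mt g 0 2 * y))) 0 0 = mt g 0 0 := by
      simp [mt_mul, Matrix.mul_apply, Fin.sum_univ_succ, e13_coe, e23_coe]
    have r1 : mt (g * (e13 (- mt g 0 2 * x) * e23 (- mt g 0 2 * y))) 0 1 = mt g 0 1 := by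
      simp [mt_mul, Matrix.mul_apply, Fin.sum_univ_succ, e13_coe, e23_coe]
    have r2 : mt (g * (e13 (- mt g 0 2 * x) * e23 (- mt g 0 2 * y))) 0 2 = 0 := by
      simp [mt_mul, Matrix.mul_apply, Fin.sum_univ_succ, e13_coe, e23_coe]
      linear_combination (- mt g 0 2) * hxy
    refine stepB hE hQ (mul_mem hg (mul_mem (hC.h13 _ d1) (hC.h23 _ d2))) ?_ r2
    rw [r0, r1]; exact hc
  exact (Subgroup.mul_mem_cancel_right E (mul_mem (hE.h13 _ d1) (hE.h23 _ d2))).1 hm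

theorem stepD (hE : HasEl E Q) (hQ : ∀ n, Q n ≠ 0) {g : SpecialLinearGroup (Fin 3) (ℕ → Zhalf)}
    (hg : g ∈ SL3Congruence _ (Ideal.span {Q})) : g ∈ E := by
  have h1 : mt (g⁻¹) 0 0 * mt g 0 0 + mt (g⁻¹) 1 0 * mt g 0 1 + mt (g⁻¹) 2 0 * mt g 0 2 = 1 := by
    have : mt (g * g⁻¹) 0 0 = 1 := by rw [mul_inv_cancel]; simp
    rw [mt_mul, Matrix.mul_apply, Fin.sum_univ_three] at this
    rw [← this]; ring
  choose s t hst using fun n => stable (congrFun h1 n)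
  have hco : IsCoprime (mt g 0 0 + t * mt g 0 2) (mt g 0 1 + s * mt g 0 2) := pi_cop hst
  obtain ⟨c, hc⟩ : ∃ c, c = e31 t * e32 s := ⟨_, rfl⟩
  have hci : c⁻¹ = e32 (-s) * e31 (-t) := by
    rw [inv_eq_iff_mul_eq_one, hc]
    apply sl_ext
    simp only [mt_mul, e32_coe, e31_coe, mt_one]
    ext i j : 2
    fin_cases i <;> fin_cases j <;> simp [Matrix.mul_apply, Fin.sum_univ_succ]
  have hm : c⁻¹ * g * c ∈ E := by
    have hΓ : c⁻¹ * g * c ∈ SL3Congruence _ (Ideal.span {Q}) := by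
      have := (cong_normal (Ideal.span {Q})).conj_mem g hg c⁻¹
      rwa [inv_inv] at this
    refine stepC hE hQ hΓ ?_
    have r0 : mt (c⁻¹ * g * c) 0 0 = mt g 0 0 + t * mt g 0 2 := by
      rw [hci, hc]
      simp only [mt_mul, Matrix.mul_apply, Fin.sum_univ_three, e32_coe, e31_coe]
      simp
      try ring
    have r1 : mt (c⁻¹ * g * c) 0 1 = mt g 0 1 + s * mt g 0 2 := by
      rw [hci, hc]
      simp only [mt_mul, Matrix.mul_apply, Fin.sum_univ_three, e32_coe, e31_coe]
      simp
      try ring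
    rw [r0, r1]; exact hco
  have := hn.conj_mem _ hm c
  convert this using 1
  group

end reduce

theorem big (q : ℕ → Zhalf) (hq : ∀ n, q n ≠ 0) :
    SL3Congruence (ℕ → Zhalf) (Ideal.span {q ^ 2}) ≤
      ⁅SL3Congruence (ℕ → Zhalf) (Ideal.span {q}), SL3Congruence (ℕ → Zhalf) (Ideal.span {q})⁆ :=
  fun _ hg => stepD (comm_hasEl q) (fun n => pow_ne_zero 2 (hq n)) hg

end Menn

open Matrix
namespace Menn

theorem cong_map {R S : Type*} [CommRing R] [CommRing S] (f : R →+* S) (q : R) :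
    (SL3Congruence R (Ideal.span {q})).map (SpecialLinearGroup.map f) ≤
      SL3Congruence S (Ideal.span {f q}) := by
  rintro _ ⟨g, hg, rfl⟩
  have hg' := mem_congQ.1 hg
  rw [mem_congQ]
  intro i j
  have h1 := map_dvd f (hg' i j)
  rw [map_sub] at h1
  have h2 : f ((1 : Matrix (Fin 3) (Fin 3) R) i j) = (1 : Matrix (Fin 3) (Fin 3) S) i j := by
    rw [Matrix.one_apply, Matrix.one_apply]
    split_ifs <;> simp
  rw [h2] at h1
  exact h1

variable (𝒩 : Ultrafilter ℕ)

/-- The quotient map from sequences to germs. -/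
def phi : (ℕ → Zhalf) →+* (𝒩 : Filter ℕ).Germ Zhalf := Filter.Germ.coeRingHom (𝒩 : Filter ℕ)

theorem phi_surj (x : (𝒩 : Filter ℕ).Germ Zhalf) : ∃ y, phi 𝒩 y = x := by
  induction x using Filter.Germ.inductionOn with
  | _ f => exact ⟨f, rfl⟩

theorem phi_eq {x y : ℕ → Zhalf} : phi 𝒩 x = phi 𝒩 y ↔ ∀ᶠ n in (𝒩 : Filter ℕ), x n = y n :=
  Filter.Germ.coe_eq

theorem span_ex (a b : (𝒩 : Filter ℕ).Germ Zhalf) (ha : a ≠ 0) :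
    ∃ d : ℕ → Zhalf, (∀ n, d n ≠ 0) ∧ Ideal.span {a, b} = Ideal.span {phi 𝒩 d} := by
  classical
  obtain ⟨α, rfl⟩ := phi_surj 𝒩 a
  obtain ⟨β, rfl⟩ := phi_surj 𝒩 b
  choose g x y hx hy hxy using fun n => gcd_ex (α n) (β n)
  have hα : α = g * x := funext hx
  have hβ : β = g * y := funext hy
  obtain ⟨u, v, huv⟩ := pi_cop hxy
  have hg : ∀ᶠ n in (𝒩 : Filter ℕ), g n ≠ 0 := by
    rw [Ultrafilter.eventually_not]
    intro h
    apply ha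
    rw [← map_zero (phi 𝒩), phi_eq]
    filter_upwards [h] with n hn
    rw [hx, hn, zero_mul]; rfl
  refine ⟨fun n => if g n = 0 then 1 else g n, ?_, ?_⟩
  · intro n
    dsimp only
    split_ifs with h
    · exact one_ne_zero
    · exact h
  · have hd : phi 𝒩 (fun n => if g n = 0 then 1 else g n) = phi 𝒩 g := by
      rw [phi_eq]
      filter_upwards [hg] with n hn
      rw [if_neg hn]
    rw [hd]
    apply le_antisymm
    · rw [Ideal.span_le]
      rintro z (rfl | rfl)
      · exact Ideal.mem_span_singleton.2 (by rw [hα, map_mul]; exact dvd_mul_right _ _)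
      · exact Ideal.mem_span_singleton.2 (by rw [hβ, map_mul]; exact dvd_mul_right _ _)
    · rw [Ideal.span_singleton_le_iff_mem, Ideal.mem_span_pair]
      refine ⟨phi 𝒩 u, phi 𝒩 v, ?_⟩
      rw [← map_mul, ← map_mul, ← map_add]
      congr 1
      rw [hα, hβ]
      linear_combination g * huv

theorem lift_ex (Q : ℕ → Zhalf) {G : SpecialLinearGroup (Fin 3) ((𝒩 : Filter ℕ).Germ Zhalf)}
    (hG : G ∈ SL3Congruence _ (Ideal.span {phi 𝒩 Q})) :
    ∃ g ∈ SL3Congruence (ℕ → Zhalf) (Ideal.span {Q}), SpecialLinearGroup.map (phi 𝒩) g = G := by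
  classical
  rw [mem_congQ] at hG
  choose γ hγ using fun i j => phi_surj 𝒩 (mt G i j)
  choose w hw using hG
  choose ζ hζ using fun i j => phi_surj 𝒩 (w i j)
  have e1 : ∀ i j, ∀ᶠ n in (𝒩 : Filter ℕ),
      γ i j n - (1 : Matrix (Fin 3) (Fin 3) Zhalf) i j = Q n * ζ i j n := by
    intro i j
    have h : phi 𝒩 (γ i j - fun _ => (1 : Matrix (Fin 3) (Fin 3) Zhalf) i j) =
        phi 𝒩 (Q * ζ i j) := by
      rw [map_sub, map_mul, hγ, hζ, ← hw]
      congr 1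
      rw [Matrix.one_apply, Matrix.one_apply]
      split_ifs
      · exact map_one (phi 𝒩)
      · exact map_zero (phi 𝒩)
    exact (phi_eq 𝒩).1 h
  have e2 : ∀ᶠ n in (𝒩 : Filter ℕ), det (Matrix.of fun i j => γ i j n) = 1 := by
    have h : phi 𝒩 (det (Matrix.of fun i j => γ i j)) = phi 𝒩 1 := by
      rw [RingHom.map_det, map_one]
      have : (phi 𝒩).mapMatrix (Matrix.of fun i j => γ i j) = mt G := by
        ext i j
        exact hγ i j
      rw [this]
      exact G.2
    have h' := (phi_eq 𝒩).1 h
    filter_upwards [h'] with n hn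
    rw [det_fin_three] at hn ⊢
    exact hn
  have e3 : ∀ᶠ n in (𝒩 : Filter ℕ), det (Matrix.of fun i j => γ i j n) = 1 ∧
      ∀ i j, γ i j n - (1 : Matrix (Fin 3) (Fin 3) Zhalf) i j = Q n * ζ i j n :=
    e2.and (Filter.eventually_all.2 fun i => Filter.eventually_all.2 fun j => e1 i j)
  obtain ⟨good, hgood⟩ : ∃ good : ℕ → Prop, good = fun n =>
    det (Matrix.of fun i j => γ i j n) = 1 ∧
      ∀ i j, γ i j n - (1 : Matrix (Fin 3) (Fin 3) Zhalf) i j = Q n * ζ i j n := ⟨_, rfl⟩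
  have e4 : ∀ᶠ n in (𝒩 : Filter ℕ), good n := by rw [hgood]; exact e3
  obtain ⟨F, hF⟩ : ∃ F : Matrix (Fin 3) (Fin 3) (ℕ → Zhalf), ∀ i j n,
    F i j n = if good n then γ i j n else (1 : Matrix (Fin 3) (Fin 3) Zhalf) i j :=
    ⟨fun i j n => if good n then γ i j n else (1 : Matrix (Fin 3) (Fin 3) Zhalf) i j,
      fun _ _ _ => rfl⟩
  have hdet : det F = 1 := by
    funext n
    have h1 : (det F) n = det (Matrix.of fun i j => F i j n) := by
      rw [det_fin_three, det_fin_three]; rfl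
    rw [h1]
    by_cases h : good n
    · have h2 : (Matrix.of fun i j => F i j n) = Matrix.of fun i j => γ i j n := by
        ext i j : 2; rw [Matrix.of_apply, Matrix.of_apply, hF, if_pos h]
      rw [h2]
      rw [hgood] at h
      exact h.1
    · have h2 : (Matrix.of fun i j => F i j n) = 1 := by
        ext i j : 2; rw [Matrix.of_apply, hF, if_neg h]
      rw [h2, det_one]; rfl
  obtain ⟨g, hg⟩ : ∃ g : SpecialLinearGroup (Fin 3) (ℕ → Zhalf), mt g = F := ⟨⟨F, hdet⟩, rfl⟩
  refine ⟨g, ?_, ?_⟩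
  · rw [mem_congQ]
    intro i j
    apply pi_dvd
    intro n
    have h0 : (mt g i j -
      (1 : Matrix (Fin 3) (Fin 3) (ℕ → Zhalf)) i j) n =
        F i j n - (1 : Matrix (Fin 3) (Fin 3) Zhalf) i j := by
      rw [hg]
      change F i j n - (1 : Matrix (Fin 3) (Fin 3) (ℕ → Zhalf)) i j n = _
      congr 1
      rw [Matrix.one_apply, Matrix.one_apply]
      split_ifs <;> rfl
    rw [h0, hF]
    split_ifs with h
    · rw [hgood] at h
      rw [h.2 i j]
      exact dvd_mul_right _ _
    · rw [sub_self]
      exact dvd_zero _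
  · apply sl_ext
    ext i j
    change phi 𝒩 (mt g i j) = mt G i j
    rw [hg, ← hγ, phi_eq]
    filter_upwards [e4] with n hn
    rw [hF, if_pos hn]

theorem main (a b : (𝒩 : Filter ℕ).Germ Zhalf) (ha : a ≠ 0) :
    SL3Congruence ((𝒩 : Filter ℕ).Germ Zhalf) ((Ideal.span {a, b}) ^ 2) ≤
      ⁅SL3Congruence ((𝒩 : Filter ℕ).Germ Zhalf) (Ideal.span {a, b}),
        SL3Congruence ((𝒩 : Filter ℕ).Germ Zhalf) (Ideal.span {a, b})⁆ := by
  obtain ⟨d, hd, hs⟩ := span_ex 𝒩 a b ha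
  rw [hs, Ideal.span_singleton_pow, ← map_pow]
  intro G hG
  obtain ⟨g, hg, rfl⟩ := lift_ex 𝒩 (d ^ 2) hG
  have h1 := Subgroup.mem_map_of_mem (SpecialLinearGroup.map (phi 𝒩)) (big d hd hg)
  rw [Subgroup.map_commutator] at h1
  exact Subgroup.commutator_mono (cong_map _ _) (cong_map _ _) h1

end Menn

theorem stmt7 (𝒩 : Ultrafilter ℕ) (h𝒩 : ∀ n : ℕ, (𝒩 : Filter ℕ) ≠ pure n)
    (a b : (𝒩 : Filter ℕ).Germ ↥Zhalf) (ha : a ≠ 0) (hb : b ≠ 0) :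
    SL3Congruence ((𝒩 : Filter ℕ).Germ ↥Zhalf) ((Ideal.span {a, b}) ^ 2) ≤
      ⁅SL3Congruence ((𝒩 : Filter ℕ).Germ ↥Zhalf) (Ideal.span {a, b}),
        SL3Congruence ((𝒩 : Filter ℕ).Germ ↥Zhalf) (Ideal.span {a, b})⁆ := by
  exact Menn.main 𝒩 a b ha
end

section
/- Let I be a nonzero ideal of ℤ[1/2], let a ∈ ℚ^× satisfy v_p(a) = 0 for every prime p with I ⊆ pℤ[1/2], and let s₁,…,s_r ∈ ℤ[1/2] be elements that are not squares in ℚ. Then there exist: an element t ∈ ℤ[1/2] with t > 0 that is not a square in ℚ; elements x, y ∈ ℤ[1/2] with x² + t·y² = 1; and, for each prime p with I ⊆ pℤ[1/2], an element ζ_p ∈ ℤ_p with ζ_p² = −t; such that: (1) for every 1 ≤ i ≤ r, s_i is not a square in the field ℚ(√−t); and (2) for every prime p with I ⊆ pℤ[1/2], v_p((x + y·ζ_p)·a⁻¹ − 1) ≥ v_p(I), where v_p(I) := max{e ∈ ℕ : I ⊆ p^e ℤ[1/2]}. -/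
theorem zh_inv (k : ℕ) : ((2:ℚ)^k)⁻¹ ∈ Zhalf := by
  have h : (2:ℚ)⁻¹ ∈ Zhalf := Subring.subset_closure (Set.mem_singleton _)
  have := pow_mem h k
  rwa [inv_pow] at this

theorem zh_form (x : ℚ) (hx : x ∈ Zhalf) : ∃ (k : ℕ) (n : ℤ), x * 2^k = n := by
  unfold Zhalf at hx
  induction hx using Subring.closure_induction with
  | mem x h => exact ⟨1, 1, by rw [Set.mem_singleton_iff.1 h]; norm_num⟩
  | zero => exact ⟨0, 0, by simp⟩
  | one => exact ⟨0, 1, by simp⟩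
  | add x y _ _ hx hy =>
    obtain ⟨k, n, h⟩ := hx
    obtain ⟨l, m, h'⟩ := hy
    refine ⟨k + l, n * 2^l + m * 2^k, ?_⟩
    push_cast
    rw [← h, ← h']; ring
  | neg x _ hx =>
    obtain ⟨k, n, h⟩ := hx
    exact ⟨k, -n, by push_cast; rw [← h]; ring⟩
  | mul x y _ _ hx hy =>
    obtain ⟨k, n, h⟩ := hx
    obtain ⟨l, m, h'⟩ := hy
    refine ⟨k + l, n * m, ?_⟩
    push_cast
    rw [← h, ← h']; ring

theorem two_norm {p : ℕ} [Fact p.Prime] (hp2 : p ≠ 2) : ‖(2:ℚ_[p])‖ = 1 := by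
  have : ‖((2:ℕ):ℚ_[p])‖ = 1 := by
    rw [Padic.norm_natCast_eq_one_iff]
    exact (Nat.coprime_primes Fact.out Nat.prime_two).2 hp2
  simpa using this

theorem zh_norm {p : ℕ} [Fact p.Prime] (hp2 : p ≠ 2) (x : ℚ) (hx : x ∈ Zhalf) :
    ‖(x : ℚ_[p])‖ ≤ 1 := by
  obtain ⟨k, n, h⟩ := zh_form x hx
  have h1 : (x : ℚ_[p]) * 2^k = n := by exact_mod_cast congrArg (fun y : ℚ => (y : ℚ_[p])) h
  have h2 := congrArg norm h1
  rw [norm_mul, norm_pow, two_norm hp2, one_pow, mul_one] at h2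
  rw [h2]
  exact Padic.norm_int_le_one n

theorem ideal_gen (I : Ideal ↥Zhalf) (hI : I ≠ ⊥) : ∃ N : ℕ, Odd N ∧ (N : Zhalf) ∈ I ∧
    ∀ p : ℕ, p ∣ N → I ≤ Ideal.span {(p : ↥Zhalf)} := by
  have hmem : ∀ g : Zhalf, g ∈ I → ∃ (k : ℕ) (n : ℤ), (g : ℚ) * 2^k = n ∧ (n : Zhalf) ∈ I := by
    intro g hg
    obtain ⟨k, n, h⟩ := zh_form g g.2
    refine ⟨k, n, h, ?_⟩
    have : (n : Zhalf) = 2^k * g := by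
      apply Subtype.ext; push_cast; rw [← h, mul_comm]; rfl
    rw [this]; exact I.mul_mem_left _ hg
  let J := I.comap (Int.castRingHom Zhalf)
  obtain ⟨N, hN⟩ := (inferInstance : J.IsPrincipal)
  have hJ : ∀ n : ℤ, (n : Zhalf) ∈ I ↔ N ∣ n := by
    intro n
    have : n ∈ J ↔ N ∣ n := by rw [hN]; exact Ideal.mem_span_singleton
    simpa [J, Ideal.mem_comap] using this
  have hN0 : N ≠ 0 := by
    rintro rfl
    apply hI
    rw [eq_bot_iff]
    intro g hg
    obtain ⟨k, n, h, hn⟩ := hmem g hg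
    rw [hJ, zero_dvd_iff] at hn
    subst hn
    have : (g : ℚ) = 0 := by simpa using h
    exact Subtype.ext this
  have hodd : ¬ (2:ℤ) ∣ N := by
    rintro ⟨M, rfl⟩
    have h1 : ((2 * M : ℤ) : Zhalf) ∈ I := (hJ _).2 dvd_rfl
    have h2 : ((M : ℤ) : Zhalf) ∈ I := by
      have : (M : Zhalf) = ⟨_, zh_inv 1⟩ * ((2 * M : ℤ) : Zhalf) := by
        apply Subtype.ext; push_cast; 
        change (M:ℚ) = (2^1)⁻¹ * (2 * M)
        ring
      rw [this]; exact I.mul_mem_left _ h1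
    rw [hJ] at h2
    have := Int.natAbs_dvd_natAbs.2 h2
    have h3 := Nat.le_of_dvd (by omega) this
    omega
  refine ⟨N.natAbs, by rw [Int.natAbs_odd]; exact Int.not_even_iff_odd.1 (fun h => hodd h.two_dvd), ?_, ?_⟩
  · have := (hJ (N.natAbs : ℤ)).2 (Int.dvd_natAbs.2 dvd_rfl)
    simpa using this
  · intro p hp g hg
    obtain ⟨k, n, h, hn⟩ := hmem g hg
    rw [hJ] at hn
    obtain ⟨m, rfl⟩ := (Int.natCast_dvd.2 hp).trans hn
    rw [Ideal.mem_span_singleton]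
    refine ⟨⟨_, zh_inv k⟩ * (m : Zhalf), ?_⟩
    apply Subtype.ext
    push_cast
    change (g:ℚ) = p * ((2^k)⁻¹ * m)
    have : (2:ℚ)^k ≠ 0 := by positivity
    push_cast at h
    field_simp
    rw [h]

theorem ideal_norm (I : Ideal ↥Zhalf) (N : ℕ) (hN : (N : Zhalf) ∈ I) {p : ℕ} [Fact p.Prime]
    (hp2 : p ≠ 2) (e : ℕ) (h : I ≤ Ideal.span {(p : ↥Zhalf)} ^ e) :
    ‖(N : ℚ_[p])‖ ≤ (p : ℝ) ^ (-(e : ℤ)) := by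
  have h1 := h hN
  rw [Ideal.span_singleton_pow, Ideal.mem_span_singleton] at h1
  obtain ⟨g, hg⟩ := h1
  have h2 : (N : ℚ) = p^e * (g:ℚ) := by
    have := congrArg (fun x : Zhalf => (x : ℚ)) hg
    simpa using this
  have h3 : (N : ℚ_[p]) = p^e * ((g:ℚ) : ℚ_[p]) := by
    exact_mod_cast congrArg (fun y : ℚ => (y : ℚ_[p])) h2
  rw [h3, norm_mul, norm_pow, Padic.norm_p, zpow_neg, zpow_natCast, inv_pow]
  exact mul_le_of_le_one_right (by positivity) (zh_norm hp2 _ g.2)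

theorem sq_lift {p : ℕ} [Fact p.Prime] (hp2 : p ≠ 2) (b : ℚ_[p]) (hb : ‖b‖ < 1) :
    ∃ η : ℚ_[p], η^2 = 1 + b ∧ ‖η‖ ≤ 1 ∧ ‖η - 1‖ ≤ ‖b‖ := by
  let b' : ℤ_[p] := ⟨b, hb.le⟩
  have h2 : ‖(2:ℤ_[p])‖ = 1 := by
    have := two_norm hp2
    rw [PadicInt.norm_def]; exact_mod_cast this
  obtain ⟨z, hz, hz1, -⟩ := hensels_lemma (p := p) (R := ℤ_[p])
    (F := Polynomial.X^2 - Polynomial.C (1 + b')) (a := 1) (by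
      simp [one_add_one_eq_two, h2]
      exact hb)
  simp [one_add_one_eq_two, h2] at hz hz1
  have h1 : (z:ℚ_[p])^2 = 1 + b := by
    have : z^2 = 1 + b' := by linear_combination hz
    exact congrArg (fun y : ℤ_[p] => (y : ℚ_[p])) this
  have h3 : ‖z + 1‖ = 1 := by
    have : z + 1 = 2 + (z - 1) := by ring
    rw [this, PadicInt.norm_add_eq_max_of_ne (by rw [h2]; exact hz1.ne'), h2, max_eq_left hz1.le]
  refine ⟨z, h1, z.2, ?_⟩
  have h4 : ‖(z:ℚ_[p]) + 1‖ = 1 := by exact_mod_cast h3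
  have h5 : b = ((z:ℚ_[p]) - 1) * (z + 1) := by linear_combination -h1
  rw [h5, norm_mul, h4, mul_one]

theorem adj_form (t : ℚ) (z : ℂ) (hz : z^2 = -((t:ℚ):ℂ)) (w : ℂ)
    (hw : w ∈ IntermediateField.adjoin ℚ {z}) : ∃ u v : ℚ, w = u + v * z := by
  have hint : IsIntegral ℚ z := by
    have : IsIntegral ℚ (z^2) := by
      rw [hz]
      have := isIntegral_algebraMap (R := ℚ) (A := ℂ) (x := -t)
      simpa using this
    exact IsIntegral.of_pow (n := 2) (by norm_num) this
  rw [← IntermediateField.mem_toSubalgebra,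
    IntermediateField.adjoin_simple_toSubalgebra_of_isAlgebraic hint.isAlgebraic] at hw
  induction hw using Algebra.adjoin_induction with
  | mem x h => exact ⟨0, 1, by rw [Set.mem_singleton_iff.1 h]; simp⟩
  | algebraMap r => exact ⟨r, 0, by simp⟩
  | add x y _ _ hx hy =>
    obtain ⟨u, v, rfl⟩ := hx
    obtain ⟨u', v', rfl⟩ := hy
    exact ⟨u + u', v + v', by push_cast; ring⟩
  | mul x y _ _ hx hy =>
    obtain ⟨u, v, rfl⟩ := hx
    obtain ⟨u', v', rfl⟩ := hy
    exact ⟨u * u' - t * v * v', u * v' + v * u', by push_cast; linear_combination (v:ℂ) * v' * hz⟩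

theorem adj_nonsq (t s : ℚ) (ht : 0 < t) (hs : ∀ w : ℚ, w^2 ≠ s) (hst : ∀ w : ℚ, w^2 ≠ t * (-s))
    (z : ℂ) (hz : z^2 = -((t:ℚ):ℂ)) (w : ℂ)
    (hw : w ∈ IntermediateField.adjoin ℚ {z}) : w^2 ≠ (s : ℂ) := by
  obtain ⟨u, v, rfl⟩ := adj_form t z hz w hw
  intro h
  have h1 : ((2 * u * v : ℚ) : ℂ) * z = ((s - u^2 + t * v^2 : ℚ) : ℂ) := by
    push_cast; linear_combination h - (v:ℂ)^2 * hz
  have h2 : 2 * u * v = 0 := by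
    by_contra h0
    have h3 : (((2 * u * v)^2 * (-t) : ℚ) : ℂ) = (((s - u^2 + t * v^2)^2 : ℚ) : ℂ) := by
      rw [Rat.cast_mul, Rat.cast_neg, ← hz, Rat.cast_pow, ← mul_pow, h1, Rat.cast_pow]
    have h4 : (2 * u * v)^2 * (-t) = (s - u^2 + t * v^2)^2 := by exact_mod_cast h3
    have : 0 < (2 * u * v)^2 := by positivity
    nlinarith [sq_nonneg (s - u^2 + t * v^2)]
  rw [h2] at h1
  have h5 : s - u^2 + t * v^2 = 0 := by
    have : ((s - u^2 + t * v^2 : ℚ) : ℂ) = 0 := by rw [← h1]; simp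
    exact_mod_cast this
  rcases mul_eq_zero.1 h2 with h6 | h6
  · have : u = 0 := by linarith
    subst this
    exact hst (t * v) (by linear_combination t * h5)
  · subst h6
    exact hs u (by linear_combination -h5)

theorem val_nonsq (q : ℕ) [Fact q.Prime] (T : ℤ) (k : ℕ) (t σ : ℚ) (hT : t * (2^k)^2 = T)
    (h1 : (q:ℤ) ∣ T) (h2 : ¬ (q:ℤ)^2 ∣ T) (h0 : σ ≠ 0) (hσ : padicValRat q σ = 0) (w : ℚ) :
    w^2 ≠ t * σ := by
  intro h
  have hT0 : T ≠ 0 := by rintro rfl; simp at h2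
  have hTq : (T:ℚ) ≠ 0 := by exact_mod_cast hT0
  have ht0 : t ≠ 0 := by rintro rfl; simp at hT; exact hTq hT.symm
  have hw0 : w ≠ 0 := by
    rintro rfl
    have := mul_ne_zero ht0 h0
    apply this; rw [← h]; simp
  have hv : padicValRat q (T:ℚ) = 1 := by
    rw [padicValRat.of_int]
    have a1 : 1 ≤ padicValInt q T := by
      have := (padicValInt_dvd_iff (p := q) 1 T).1 (by simpa using h1)
      tauto
    have a2 : ¬ 2 ≤ padicValInt q T := fun h => h2 ((padicValInt_dvd_iff (p := q) 2 T).2 (Or.inr h))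
    have : padicValInt q T = 1 := by omega
    rw [this]; rfl
  have e1 : w^2 * (2^k)^2 = T * σ := by rw [h, ← hT]; ring
  have e2 := congrArg (padicValRat q) e1
  rw [padicValRat.mul (by positivity) (by positivity), padicValRat.mul hTq h0, hv, hσ,
    padicValRat.pow, padicValRat.pow] at e2
  push_cast at e2
  omega

theorem local_sol {p : ℕ} [Fact p.Prime] (hp2 : p ≠ 2) (N A d c m n : ℤ) (k : ℕ) (a : ℚ)
    (hN : ‖(N : ℚ_[p])‖ < 1) (hA : ‖(A : ℚ_[p])‖ = 1) (hd : d = A^2 - 1) (hd0 : d ≠ 0)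
    (hc : 2 * A * c - (A^2 + 1) * 2^k = N * d^2 * m)
    (ha : ‖(a : ℚ_[p])‖ = 1) (hden : ‖(a.den : ℚ_[p])‖ = 1) (hn : a.den * A - a.num = N * n) :
    ∃ ζ : ℤ_[p], (ζ : ℚ_[p])^2 = -(((1 - (c / 2^k)^2 : ℚ)) : ℚ_[p]) ∧
      ‖((((c / 2^k : ℚ)) : ℚ_[p]) + ζ) * (a : ℚ_[p])⁻¹ - 1‖ ≤ ‖(N : ℚ_[p])‖ := by
  have h2 := two_norm hp2
  have h20 : (2:ℚ_[p]) ≠ 0 := by rw [← norm_ne_zero_iff, h2]; norm_num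
  have hA0 : (A:ℚ_[p]) ≠ 0 := by rw [← norm_ne_zero_iff, hA]; norm_num
  have ha0 : (a:ℚ_[p]) ≠ 0 := by rw [← norm_ne_zero_iff, ha]; norm_num
  have hden0 : (a.den:ℚ_[p]) ≠ 0 := by rw [← norm_ne_zero_iff, hden]; norm_num
  have hd0' : (d:ℚ_[p]) ≠ 0 := by exact_mod_cast hd0
  have hd' : (d:ℚ_[p]) = A^2 - 1 := by rw [hd]; push_cast; ring
  have hc' : (2:ℚ_[p]) * A * c - (A^2 + 1) * 2^k = N * d^2 * m := by exact_mod_cast hc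
  have hint : ∀ r : ℤ, ‖(N:ℚ_[p]) * r‖ ≤ ‖(N:ℚ_[p])‖ := fun r => by
    rw [norm_mul]; exact mul_le_of_le_one_right (norm_nonneg _) (Padic.norm_int_le_one r)
  have h2k0 : (2:ℚ_[p])^k ≠ 0 := pow_ne_zero _ h20
  let b : ℚ_[p] := N * ((m * (2 * A * c + (A^2 + 1) * 2^k) : ℤ) : ℚ_[p]) / (2^k)^2
  have hb : ‖b‖ ≤ ‖(N:ℚ_[p])‖ := by
    have : ‖b‖ = ‖(N:ℚ_[p]) * ((m * (2 * A * c + (A^2 + 1) * 2^k) : ℤ) : ℚ_[p])‖ := by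
      simp only [b]
      rw [norm_div, norm_pow, norm_pow, h2]; simp
    rw [this]; exact hint _
  obtain ⟨η, hη, hη1, hη2⟩ := sq_lift hp2 b (hb.trans_lt hN)
  have h2A : ‖(2:ℚ_[p]) * A‖ = 1 := by rw [norm_mul, h2, hA, one_mul]
  have hζ : ‖(d:ℚ_[p]) * η / (2 * A)‖ ≤ 1 := by
    rw [norm_div, h2A, norm_mul, div_one]
    exact mul_le_one₀ (Padic.norm_int_le_one d) (norm_nonneg _) hη1
  refine ⟨⟨_, hζ⟩, ?_, ?_⟩
  · push_cast
    rw [div_pow, mul_pow, hη]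
    simp only [b]
    push_cast
    field_simp
    have e : (N:ℚ_[p]) * m * d^2 = 2 * A * c - (A^2 + 1) * 2^k := by rw [hc']; ring
    have e2 : (d:ℚ_[p])^2 = (A^2-1)^2 := by rw [hd']
    linear_combination (2 * A * c + (A^2 + 1) * 2^k) * e + (2^k)^2 * e2
  · push_cast
    have key : ((c:ℚ_[p]) / 2^k + (d:ℚ_[p]) * η / (2 * A)) * (a:ℚ_[p])⁻¹ - 1 =
        ((N * ((d^2 * m : ℤ) : ℚ_[p]) / 2^k + d * (η - 1)) / (2 * A) + (N * n) / a.den) / a := by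
      have hq : (a : ℚ_[p]) = a.num / a.den := by exact_mod_cast congrArg (fun y : ℚ => (y : ℚ_[p])) (Rat.num_div_den a).symm
      have e1 : (N:ℚ_[p]) * n = a.den * A - a.num := by exact_mod_cast hn.symm
      have e3 : ((N:ℚ_[p]) * n) / a.den = A - a := by rw [e1, hq]; field_simp
      have e4 : (N:ℚ_[p]) * ((d^2 * m : ℤ) : ℚ_[p]) / 2^k = 2 * A * c / 2^k - (A^2+1) := by
        push_cast
        rw [← mul_assoc, ← hc']; field_simp
      rw [e3, e4]
      field_simp
      rw [hd']
      ring
    change ‖((c:ℚ_[p]) / 2^k + (d:ℚ_[p]) * η / (2 * A)) * (a:ℚ_[p])⁻¹ - 1‖ ≤ _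
    rw [key, norm_div, ha, div_one]
    refine (Padic.nonarchimedean _ _).trans (max_le ?_ ?_)
    · rw [norm_div, h2A, div_one]
      refine (Padic.nonarchimedean _ _).trans (max_le ?_ ?_)
      · rw [norm_div, norm_pow, h2, one_pow, div_one]; exact hint _
      · rw [norm_mul]
        exact (mul_le_of_le_one_left (norm_nonneg _) (Padic.norm_int_le_one d)).trans (hη2.trans hb)
    · rw [norm_div, hden, div_one]; exact hint _

theorem lin_sol (a n r : ℤ) (hn : 0 < n) (h : IsCoprime a n) : ∃ b : ℤ, 0 < b ∧ n ∣ a * b - r := by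
  obtain ⟨u, v, e⟩ := h
  refine ⟨(u * r) % n + n, by have := Int.emod_nonneg (u * r) hn.ne'; omega, ?_⟩
  have : u * r = n * (u * r / n) + (u*r) % n := (Int.mul_ediv_add_emod _ _).symm
  refine ⟨a - v * r - a * (u * r / n), ?_⟩
  linear_combination r * e - a * this

theorem pow_sol (M c : ℤ) (hM : IsCoprime 2 M) : ∃ k : ℕ, M ∣ 2^k - 1 ∧ c < 2^k := by
  have h1 : Nat.Coprime 2 M.natAbs := by
    have := Int.isCoprime_iff_gcd_eq_one.1 hM
    simpa [Int.gcd] using this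
  have hM0 : 0 < M.natAbs := by
    rcases Nat.eq_zero_or_pos M.natAbs with h | h
    · rw [h] at h1; norm_num at h1
    · exact h
  have h2 := (Nat.ModEq.pow_totient h1).pow (c.natAbs + 1)
  rw [← pow_mul, one_pow] at h2
  refine ⟨Nat.totient M.natAbs * (c.natAbs + 1), ?_, ?_⟩
  · have := (Nat.modEq_iff_dvd.1 h2.symm)
    push_cast at this
    rw [abs_dvd] at this
    exact this
  · have h3 : c.natAbs < 2^c.natAbs := Nat.lt_two_pow_self
    have h4 : 2^c.natAbs ≤ 2^(Nat.totient M.natAbs * (c.natAbs + 1)) := by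
      apply Nat.pow_le_pow_right (by norm_num)
      have := Nat.totient_pos.2 hM0
      exact (Nat.le_succ _).trans (Nat.le_mul_of_pos_left _ this)
    have h5 := h3.trans_le h4
    have h6 : (c.natAbs : ℤ) < 2^(Nat.totient M.natAbs * (c.natAbs + 1)) := by exact_mod_cast h5
    omega

theorem val_zero (q : ℕ) [Fact q.Prime] (s : ℚ) (hs : s ≠ 0) (h1 : s.num.natAbs < q) (h2 : s.den < q) :
    padicValRat q s = 0 := by
  have a1 : ¬ q ∣ s.num.natAbs := fun h => by
    have := Nat.le_of_dvd (by have := Rat.num_ne_zero.2 hs; omega) h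
    omega
  have a2 : ¬ q ∣ s.den := fun h => by
    have := Nat.le_of_dvd s.den_pos h
    omega
  rw [padicValRat_def, padicValInt, padicValNat.eq_zero_of_not_dvd a1, padicValNat.eq_zero_of_not_dvd a2]
  simp

theorem unit_parts (p : ℕ) [Fact p.Prime] (a : ℚ) (ha : a ≠ 0) (h : padicValRat p a = 0) :
    ¬ p ∣ a.num.natAbs ∧ ¬ p ∣ a.den := by
  have hn : a.num.natAbs ≠ 0 := by have := Rat.num_ne_zero.2 ha; omega
  rw [padicValRat_def, padicValInt] at h
  have hc := a.reduced
  have key : ¬ (p ∣ a.num.natAbs ∧ p ∣ a.den) := fun ⟨h1, h2⟩ =>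
    Nat.not_coprime_of_dvd_of_dvd (Fact.out : p.Prime).one_lt h1 h2 hc
  have i1 := dvd_iff_padicValNat_ne_zero (p := p) hn
  have i2 := dvd_iff_padicValNat_ne_zero (p := p) a.den_ne_zero
  rw [i1, i2] at key
  rw [i1, i2]
  omega

theorem stmt14 (I : Ideal ↥Zhalf) (hI : I ≠ ⊥) (a : ℚ) (ha : a ≠ 0)
    (hva : ∀ p : ℕ, p.Prime → p ≠ 2 → I ≤ Ideal.span {(p : ↥Zhalf)} → padicValRat p a = 0)
    (r : ℕ) (s : Fin r → ↥Zhalf) (hs : ∀ i : Fin r, ∀ w : ℚ, w ^ 2 ≠ ((s i : ℚ))) :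
    ∃ (t x y : ↥Zhalf) (ζ : ∀ (p : ℕ) (hp : p.Prime), @PadicInt p ⟨hp⟩),
      0 < (t : ℚ) ∧ (∀ w : ℚ, w ^ 2 ≠ (t : ℚ)) ∧
      (x : ℚ) ^ 2 + (t : ℚ) * (y : ℚ) ^ 2 = 1 ∧
      -- (1): each `s i` is not a square in `ℚ(√−t)`
      (∀ i : Fin r, ∀ z : ℂ, z ^ 2 = -((t : ℚ) : ℂ) →
        ∀ w ∈ IntermediateField.adjoin ℚ {z}, w ^ 2 ≠ ((s i : ℚ) : ℂ)) ∧
      -- for each odd prime `p` with `I ⊆ p ℤ[1/2]`: `ζ_p² = −t` and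
      -- (2): `v_p((x + y ζ_p) a⁻¹ − 1) ≥ v_p(I)`
      (∀ (p : ℕ) (hp : p.Prime), p ≠ 2 → I ≤ Ideal.span {(p : ↥Zhalf)} →
        letI : Fact p.Prime := ⟨hp⟩
        (ζ p hp : ℚ_[p]) ^ 2 = -(((t : ℚ) : ℚ_[p])) ∧
        ∀ e : ℕ, I ≤ Ideal.span {(p : ↥Zhalf)} ^ e →
          ‖(((x : ℚ) : ℚ_[p]) + ((y : ℚ) : ℚ_[p]) * (ζ p hp : ℚ_[p])) * ((a : ℚ_[p]))⁻¹ - 1‖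
            ≤ (p : ℝ) ^ (-(e : ℤ))) := by
  obtain ⟨N, hNodd, hNI, hNp⟩ := ideal_gen I hI
  have hN0 : 0 < N := hNodd.pos
  have hcop : ∀ p : ℕ, p.Prime → p ∣ N → ¬ p ∣ a.num.natAbs ∧ ¬ p ∣ a.den := by
    intro p hp hpN
    haveI : Fact p.Prime := ⟨hp⟩
    refine unit_parts p a ha (hva p hp ?_ (hNp p hpN))
    rintro rfl
    exact (Nat.not_even_iff_odd.2 hNodd) (even_iff_two_dvd.2 hpN)
  have h2N : IsCoprime (2:ℤ) N := by
    have : Nat.Coprime 2 N := (Nat.coprime_two_left).2 hNodd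
    exact_mod_cast Nat.isCoprime_iff_coprime.2 this
  have hdenN : IsCoprime (a.den:ℤ) N := by
    rw [Nat.isCoprime_iff_coprime]
    exact Nat.coprime_of_dvd fun p hp h1 h2 => (hcop p hp h2).2 h1
  have hnumN : IsCoprime a.num N := by
    rw [Int.isCoprime_iff_gcd_eq_one]
    change Nat.Coprime a.num.natAbs (N:ℤ).natAbs
    exact Nat.coprime_of_dvd fun p hp h1 h2 => (hcop p hp h2).1 h1
  -- the even integer `A` congruent to `a` modulo `N`
  obtain ⟨B, hB, n, hn⟩ := lin_sol (a.den * 2) N a.num (by exact_mod_cast hN0) (hdenN.mul_left h2N)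
  obtain ⟨A, hAdef⟩ : ∃ A : ℤ, A = 2 * B := ⟨_, rfl⟩
  have hAn : a.den * A - a.num = N * n := by rw [hAdef, ← hn]; ring
  have hAN : IsCoprime A N := by
    have : IsCoprime (a.den * A) (N:ℤ) := by
      have e : (a.den:ℤ) * A = a.num + N * n := by linear_combination hAn
      rw [e]; exact hnumN.add_mul_left_left n
    exact this.of_mul_left_right
  obtain ⟨d, hd⟩ : ∃ d : ℤ, d = A^2 - 1 := ⟨_, rfl⟩
  have hdpos : 0 < d := by rw [hd, hAdef]; nlinarith
  have hAd : IsCoprime A d := ⟨A, -1, by rw [hd]; ring⟩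
  have h2d : IsCoprime 2 d := ⟨A * B, -1, by rw [hd, hAdef]; ring⟩
  obtain ⟨P, hP⟩ : ∃ P : ℤ, P = N * d^2 := ⟨_, rfl⟩
  have hPpos : 0 < P := by rw [hP]; have : (0:ℤ) < N := by exact_mod_cast hN0
                           positivity
  have h2P : IsCoprime 2 P := by rw [hP]; exact h2N.mul_right h2d.pow_right
  have hAP : IsCoprime A P := by rw [hP]; exact hAN.mul_right hAd.pow_right
  -- the auxiliary prime `q`
  obtain ⟨q, hqge, hq⟩ := Nat.exists_infinite_primes
    (3 + P.natAbs + ∑ i, ((s i : ℚ).num.natAbs + (s i : ℚ).den))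
  haveI : Fact q.Prime := ⟨hq⟩
  have hqP : IsCoprime P ((q:ℤ)^2) := by
    apply IsCoprime.pow_right
    rw [Int.isCoprime_iff_gcd_eq_one]
    change Nat.Coprime P.natAbs (q:ℤ).natAbs
    rw [Nat.coprime_comm]
    refine (Nat.Prime.coprime_iff_not_dvd hq).2 fun h => ?_
    have := Nat.le_of_dvd (by omega) h
    omega
  have h2q : IsCoprime 2 ((q:ℤ)^2) := by
    apply IsCoprime.pow_right
    have : Nat.Coprime 2 q := (Nat.coprime_primes Nat.prime_two hq).2 (by omega)
    exact_mod_cast Nat.isCoprime_iff_coprime.2 this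
  have hq0 : (0:ℤ) < q := by exact_mod_cast hq.pos
  obtain ⟨c₀, hc₀, c₁, hc₁⟩ := lin_sol (2 * A) P (A^2 + 1) hPpos (h2P.mul_left hAP)
  obtain ⟨j, hj, j₁, hj₁⟩ := lin_sol P ((q:ℤ)^2) (1 + q - c₀) (by positivity) hqP
  obtain ⟨c, hc⟩ : ∃ c : ℤ, c = c₀ + P * j := ⟨_, rfl⟩
  have hcpos : 0 < c := by rw [hc]; positivity
  obtain ⟨k, ⟨l, hl⟩, hck⟩ := pow_sol (P * (q:ℤ)^2) c (h2P.mul_right h2q)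
  have hcm : 2 * A * c - (A^2 + 1) * 2^k = N * d^2 * (c₁ + 2 * A * j - (A^2 + 1) * (q:ℤ)^2 * l) := by
    rw [← hP, hc]
    linear_combination hc₁ - (A^2+1) * hl
  -- `T = 4^k - c^2` is exactly divisible by `q`
  have hTq : ∃ f : ℤ, ((2:ℤ)^k)^2 - c^2 = -2 * q + (q:ℤ)^2 * f := by
    have e1 : (2:ℤ)^k = 1 + (q:ℤ)^2 * (P * l) := by linear_combination hl
    have e2 : c = 1 + q + (q:ℤ)^2 * j₁ := by rw [hc]; linear_combination hj₁
    rw [e1, e2]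
    exact ⟨2 * (P * l) + (q:ℤ)^2 * (P*l)^2 - 1 - 2 * (1 + q) * j₁ - (q:ℤ)^2 * j₁^2, by ring⟩
  obtain ⟨f, hf⟩ := hTq
  have hT1 : (q:ℤ) ∣ ((2:ℤ)^k)^2 - c^2 := ⟨-2 + q * f, by rw [hf]; ring⟩
  have hT2 : ¬ (q:ℤ)^2 ∣ ((2:ℤ)^k)^2 - c^2 := by
    rintro ⟨g, hg⟩
    have e : (q:ℤ) * (q * (f - g)) = q * 2 := by linear_combination hg - hf
    have e2 := mul_left_cancel₀ hq0.ne' e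
    have : (q:ℤ) ∣ 2 := ⟨_, e2.symm⟩
    have := Int.le_of_dvd (by norm_num) this
    omega
  have h2k : (0:ℚ) < 2^k := by positivity
  have hxmem : (c / 2^k : ℚ) ∈ Zhalf := by
    rw [div_eq_mul_inv]; exact mul_mem (intCast_mem Zhalf c) (zh_inv k)
  have htmem : (1 - (c / 2^k)^2 : ℚ) ∈ Zhalf := sub_mem (one_mem _) (pow_mem hxmem 2)
  have hTt : (1 - (c / 2^k)^2 : ℚ) * (2^k)^2 = ((((2:ℤ)^k)^2 - c^2 : ℤ) : ℚ) := by
    push_cast; field_simp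
  have htpos : (0:ℚ) < 1 - (c / 2^k)^2 := by
    have h1 : (c / 2^k : ℚ) < 1 := by rw [div_lt_one h2k]; exact_mod_cast hck
    have h0 : (0:ℚ) < c / 2^k := div_pos (by exact_mod_cast hcpos) h2k
    nlinarith
  have hloc : ∀ (p : ℕ) (hp : p.Prime), ∃ ζ : @PadicInt p ⟨hp⟩,
      p ≠ 2 → I ≤ Ideal.span {(p : ↥Zhalf)} →
        letI : Fact p.Prime := ⟨hp⟩
        (ζ : ℚ_[p])^2 = -(((1 - (c / 2^k)^2 : ℚ)) : ℚ_[p]) ∧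
      ‖((((c / 2^k : ℚ)) : ℚ_[p]) + ζ) * (a : ℚ_[p])⁻¹ - 1‖ ≤ ‖(N : ℚ_[p])‖ := by
    intro p hp
    haveI : Fact p.Prime := ⟨hp⟩
    by_cases hp2 : p ≠ 2
    swap
    · exact ⟨0, fun h => absurd h hp2⟩
    by_cases hIp : I ≤ Ideal.span {(p : ↥Zhalf)}
    swap
    · exact ⟨0, fun _ h => absurd h hIp⟩
    have hNn : ‖(N : ℚ_[p])‖ < 1 := by
      refine (ideal_norm I N hNI hp2 1 (by simpa using hIp)).trans_lt ?_
      have : (1:ℝ) < p := by exact_mod_cast hp.one_lt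
      simpa using inv_lt_one_of_one_lt₀ this
    have hpN : p ∣ N := (Padic.norm_natCast_lt_one_iff).1 hNn
    have hcp : ∀ z : ℤ, IsCoprime z N → ‖(z : ℚ_[p])‖ = 1 := by
      intro z hz
      rw [Padic.norm_intCast_eq_one_iff]
      exact hz.of_isCoprime_of_dvd_right (by exact_mod_cast hpN)
    have hden : ‖(a.den : ℚ_[p])‖ = 1 := by exact_mod_cast hcp _ hdenN
    have han : ‖(a : ℚ_[p])‖ = 1 := by
      have hq : (a : ℚ_[p]) = a.num / a.den := by exact_mod_cast congrArg (fun y : ℚ => (y : ℚ_[p])) (Rat.num_div_den a).symm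
      rw [hq, norm_div, hden, hcp _ hnumN, div_one]
    obtain ⟨ζ, h1, h2⟩ := local_sol hp2 N A d c _ n k a (by exact_mod_cast hNn) (hcp _ hAN) hd hdpos.ne'
      hcm han hden hAn
    exact ⟨ζ, fun _ _ => ⟨h1, by exact_mod_cast h2⟩⟩
  choose ζ hζ using hloc
  have hs0 : ∀ i, (s i : ℚ) ≠ 0 := fun i h => hs i 0 (by rw [h]; norm_num)
  refine ⟨⟨_, htmem⟩, ⟨_, hxmem⟩, 1, ζ, htpos, ?_, ?_, ?_, ?_⟩
  · intro w
    have := val_nonsq q _ k _ 1 hTt hT1 hT2 one_ne_zero (by simp) w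
    simpa using this
  · simp
  · intro i z hz w hw
    refine adj_nonsq _ (s i : ℚ) htpos (hs i) (fun w => ?_) z hz w hw
    refine val_nonsq q _ k _ _ hTt hT1 hT2 (neg_ne_zero.2 (hs0 i)) ?_ w
    have hle := Finset.single_le_sum (f := fun i => (s i : ℚ).num.natAbs + (s i : ℚ).den)
      (fun _ _ => Nat.zero_le _) (Finset.mem_univ i)
    rw [padicValRat.neg]
    exact val_zero q _ (hs0 i) (by omega) (by omega)
  · intro p hp hp2 hIp
    haveI : Fact p.Prime := ⟨hp⟩
    obtain ⟨h1, h2⟩ := hζ p hp hp2 hIp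
    refine ⟨h1, fun e he => ?_⟩
    have h3 := ideal_norm I N hNI hp2 e he
    refine le_trans (le_of_eq ?_) (h2.trans h3)
    simp
end
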